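/- arXiv:2602.14537 — 9 statements merged into one kernel-verified Lean document; each statement's English description precedes it below -/
import Mathlib

section
/- Consider a discrete-time controlled system x⁺ = f(x,u) and fix N ≥ 1. Suppose the input set 𝒰 ⊆ ℝ^m is compact and has non-empty interior, and let 𝒰̄ := 𝒰 × ⋯ × 𝒰 (N-fold Cartesian product). If for every ε > 0 there exist a function Φ_ε : 𝒳 → ℝ^n and a matrix B_ε ∈ ℝ^{n × Nm} (independent of x) such that sup over x ∈ 𝒳 and u_{0:N−1} ∈ 𝒰̄ of ‖f_N(x, u_{0:N−1}) − Φ_ε(x) − B_ε·col(u_0, …, u_{N−1})‖₂ ≤ ε, then the system admits an (exact) N-step linear predictor. -/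
open Matrix

noncomputable section

/-- The `N`-step iterated dynamics `f_N`, defined by `f_1(x,u₀) = f(x,u₀)` and
`f_{j+1}(x, u_{0:j}) = f(f_j(x, u_{0:j-1}), u_j)` (with `f_0(x) = x`). -/
def iterDyn {ι : Type} {m : ℕ} (f : (ι → ℝ) → (Fin m → ℝ) → (ι → ℝ)) :
    (N : ℕ) → (ι → ℝ) → (Fin N → (Fin m → ℝ)) → (ι → ℝ)
  | 0, x, _ => x
  | N + 1, x, u => f (iterDyn f N x (fun i => u i.castSucc)) (u (Fin.last N))

/-- The system `x⁺ = f(x,u)` admits an `N`-step linear predictor on `X`, `U`: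
`f_N(x, u_{0:N-1}) = Φ(x) + B · col(u_0, …, u_{N-1})`. -/
def HasNStepLinearPredictor {ι : Type} [Fintype ι] {m : ℕ}
    (f : (ι → ℝ) → (Fin m → ℝ) → (ι → ℝ))
    (X : Set (ι → ℝ)) (U : Set (Fin m → ℝ)) (N : ℕ) : Prop :=
  ∃ (Φ : (ι → ℝ) → (ι → ℝ)) (B : Matrix ι (Fin N × Fin m) ℝ),
    ∀ x ∈ X, ∀ u : Fin N → (Fin m → ℝ), (∀ i, u i ∈ U) →
      iterDyn f N x u = Φ x + B.mulVec (fun p => u p.1 p.2)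

/-- A family of real functions `F x` on `V`, uniformly approximable by affine functions whose
linear part does not depend on `x`, is affine with a common linear part, provided `V` contains a
point together with its translates along the coordinate axes. -/
theorem exists_common_linear_part {α κ : Type*} [Fintype κ] [DecidableEq κ]
    (F : α → (κ → ℝ) → ℝ) (X : Set α) (V : Set (κ → ℝ)) (v₀ : κ → ℝ) (δ : ℝ) (hδ : δ ≠ 0)
    (hv₀ : v₀ ∈ V) (hV : ∀ p, v₀ + Pi.single p δ ∈ V)
    (happrox : ∀ ε : ℝ, 0 < ε → ∃ (φ : α → ℝ) (b : κ → ℝ),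
      ∀ x ∈ X, ∀ v ∈ V, |F x v - (φ x + b ⬝ᵥ v)| ≤ ε) :
    ∃ b : κ → ℝ, ∀ x ∈ X, ∀ v ∈ V, F x v = F x v₀ + b ⬝ᵥ (v - v₀) := by
  rcases X.eq_empty_or_nonempty with rfl | ⟨x₀, hx₀⟩
  · exact ⟨0, by simp⟩
  refine ⟨fun p => (F x₀ (v₀ + Pi.single p δ) - F x₀ v₀) / δ, fun x hx v hv => ?_⟩
  set b : κ → ℝ := fun p => (F x₀ (v₀ + Pi.single p δ) - F x₀ v₀) / δ with hb
  set C : ℝ := 2 + ∑ p, 2 / |δ| * |(v - v₀) p| with hC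
  have hCpos : 0 < C := by positivity
  have key : ∀ ε : ℝ, 0 < ε → |F x v - F x v₀ - b ⬝ᵥ (v - v₀)| ≤ ε * C := by
    intro ε hε
    obtain ⟨φ, c, h⟩ := happrox ε hε
    have hdiff : ∀ y ∈ X, ∀ w ∈ V, |F y w - F y v₀ - c ⬝ᵥ (w - v₀)| ≤ 2 * ε := by
      intro y hy w hw
      have h₁ := abs_le.1 (h y hy w hw)
      have h₂ := abs_le.1 (h y hy v₀ hv₀)
      rw [dotProduct_sub, abs_le]
      constructor <;> linarith [h₁.1, h₁.2, h₂.1, h₂.2]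
    have hcb : ∀ p, |(c - b) p| ≤ ε * (2 / |δ|) := by
      intro p
      have h₁ := hdiff x₀ hx₀ _ (hV p)
      rw [add_sub_cancel_left, dotProduct_single] at h₁
      have h₂ : (c - b) p = -(F x₀ (v₀ + Pi.single p δ) - F x₀ v₀ - c p * δ) / δ := by
        simp only [hb, Pi.sub_apply]
        field_simp
        ring
      rw [h₂, abs_div, abs_neg, mul_div_assoc', mul_comm ε]
      gcongr
    have hsum : |(c - b) ⬝ᵥ (v - v₀)| ≤ ε * ∑ p, 2 / |δ| * |(v - v₀) p| := by
      rw [Finset.mul_sum]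
      refine (Finset.abs_sum_le_sum_abs _ _).trans (Finset.sum_le_sum fun p _ => ?_)
      rw [abs_mul, ← mul_assoc]
      gcongr
      exact hcb p
    calc |F x v - F x v₀ - b ⬝ᵥ (v - v₀)|
        = |(F x v - F x v₀ - c ⬝ᵥ (v - v₀)) + (c - b) ⬝ᵥ (v - v₀)| := by
          rw [sub_dotProduct]; ring_nf
      _ ≤ 2 * ε + ε * ∑ p, 2 / |δ| * |(v - v₀) p| :=
          (abs_add_le _ _).trans (add_le_add (hdiff x hx v hv) hsum)
      _ = ε * C := by rw [hC]; ring
  have hzero : |F x v - F x v₀ - b ⬝ᵥ (v - v₀)| ≤ 0 := by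
    refine le_of_forall_pos_le_add fun η hη => ?_
    simpa [hCpos.ne'] using key (η / C) (by positivity)
  linarith [abs_nonpos_iff.1 hzero]

/-- **Exact linear predictors from uniform approximation.**  If for every `ε > 0` the
`N`-step evolution can be approximated, uniformly over states `x ∈ 𝒳` and admissible input
sequences, within `ε` (in the 2-norm) by a map of the form `Φ_ε(x) + B_ε u_{0:N-1}`, and the
input set `𝒰` is compact with non-empty interior, then the system admits an exact `N`-step
linear predictor. -/
theorem exact_linear_predictor_from_uniform_approximation
    {n m : ℕ} (f : (Fin n → ℝ) → (Fin m → ℝ) → (Fin n → ℝ))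
    (X : Set (Fin n → ℝ)) (U : Set (Fin m → ℝ)) (N : ℕ) (hN : 1 ≤ N)
    (hf : ∀ x ∈ X, ∀ u ∈ U, f x u ∈ X)
    (hUcompact : IsCompact U) (hUint : (interior U).Nonempty)
    (happrox : ∀ ε : ℝ, 0 < ε →
      ∃ (Φ : (Fin n → ℝ) → (Fin n → ℝ)) (B : Matrix (Fin n) (Fin N × Fin m) ℝ),
        ∀ x ∈ X, ∀ u : Fin N → (Fin m → ℝ), (∀ i, u i ∈ U) →
          Real.sqrt (∑ i, (iterDyn f N x u i -
            (Φ x + B.mulVec (fun p => u p.1 p.2)) i) ^ 2) ≤ ε) :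
    HasNStepLinearPredictor f X U N := by
  obtain ⟨u₀, hu₀⟩ := hUint
  obtain ⟨r, hr, hball⟩ := Metric.isOpen_iff.1 isOpen_interior u₀ hu₀
  set V : Set (Fin N × Fin m → ℝ) := {v | ∀ i, (fun j => v (i, j)) ∈ U}
  set v₀ : Fin N × Fin m → ℝ := fun p => u₀ p.2 with hv₀def
  have hv₀ : v₀ ∈ V := fun _ => interior_subset hu₀
  have hV : ∀ p, v₀ + Pi.single p (r / 2) ∈ V := by
    refine fun p i => interior_subset (hball ?_)
    rw [Metric.mem_ball]
    refine lt_of_le_of_lt ((dist_pi_le_iff (half_pos hr).le).2 fun j => ?_) (half_lt_self hr)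
    by_cases h : (i, j) = p
    · subst h
      simp [hv₀def, abs_of_pos hr]
    · simp [hv₀def, h, (half_pos hr).le]
  have hcoord : ∀ k, ∃ b : Fin N × Fin m → ℝ, ∀ x ∈ X, ∀ v ∈ V,
      iterDyn f N x (fun i j => v (i, j)) k
        = iterDyn f N x (fun i j => v₀ (i, j)) k + b ⬝ᵥ (v - v₀) := by
    intro k
    refine exists_common_linear_part (fun x v => iterDyn f N x (fun i j => v (i, j)) k)
      X V v₀ (r / 2) (half_pos hr).ne' hv₀ hV fun ε hε => ?_
    obtain ⟨Φ, B, h⟩ := happrox ε hε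
    refine ⟨fun x => Φ x k, B k, fun x hx v hv => ?_⟩
    refine le_trans ?_ (h x hx (fun i j => v (i, j)) hv)
    exact Real.abs_le_sqrt (Finset.single_le_sum
      (f := fun i => (iterDyn f N x (fun i j => v (i, j)) i - (Φ x + B.mulVec v) i) ^ 2)
      (fun i _ => sq_nonneg _) (Finset.mem_univ k))
  choose B hB using hcoord
  refine ⟨fun x => iterDyn f N x (fun i j => v₀ (i, j)) - Matrix.mulVec B v₀, B,
    fun x hx u hu => funext fun k => ?_⟩
  have h := hB k x hx (fun p => u p.1 p.2) hu
  rw [dotProduct_sub] at h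
  simp only [Pi.add_apply, Pi.sub_apply, Matrix.mulVec]
  linarith
end
end

section
/- (Equivalence of (n+1)-step linear predictability and the CAP structure.) Consider a discrete-time controlled system x⁺ = f(x,u) with 𝒳 ⊆ ℝ^n open and convex, 𝒰 ⊆ ℝ^m open, and f : 𝒳 × 𝒰 → 𝒳 surjective. Then the system admits an N-step linear predictor for every N ∈ {1, …, n+1} if and only if the system admits a control-affine preserved (CAP) structure. -/
open Matrix

noncomputable section

/-- The system admits a control-affine preserved (CAP) structure: there are an invertible
change of coordinates `T` (with inverse `S`), a partition of the state into `x̃₁ ∈ ℝ^{n₁}` and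
`x̃₂ ∈ ℝ^{n₂}`, functions `g`, `h` and matrices `C`, `D` such that in the new coordinates
`x̃₁⁺ = g(x̃₂) + C x̃₁ + D u` and `x̃₂⁺ = h(x̃₂)`. -/
def HasCAP {ι : Type} [Fintype ι] [DecidableEq ι] {m : ℕ}
    (f : (ι → ℝ) → (Fin m → ℝ) → (ι → ℝ))
    (X : Set (ι → ℝ)) (U : Set (Fin m → ℝ)) : Prop :=
  ∃ (n₁ n₂ : ℕ) (T : Matrix (Fin n₁ ⊕ Fin n₂) ι ℝ) (S : Matrix ι (Fin n₁ ⊕ Fin n₂) ℝ),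
    T * S = 1 ∧ S * T = 1 ∧
    ∃ (g : (Fin n₂ → ℝ) → (Fin n₁ → ℝ)) (h : (Fin n₂ → ℝ) → (Fin n₂ → ℝ))
      (C : Matrix (Fin n₁) (Fin n₁) ℝ) (D : Matrix (Fin n₁) (Fin m) ℝ),
      ∀ x ∈ X, ∀ u ∈ U,
        T.mulVec (f x u) =
          Sum.elim
            (g (fun i => T.mulVec x (Sum.inr i)) +
              C.mulVec (fun i => T.mulVec x (Sum.inl i)) + D.mulVec u)
            (h (fun i => T.mulVec x (Sum.inr i)))

theorem hasNStepLinearPredictor_iff_linearMap {ι : Type} [Fintype ι] {m : ℕ}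
    (f : (ι → ℝ) → (Fin m → ℝ) → (ι → ℝ)) (X : Set (ι → ℝ)) (U : Set (Fin m → ℝ)) (N : ℕ) :
    HasNStepLinearPredictor f X U N ↔
      ∃ (Φ : (ι → ℝ) → (ι → ℝ)) (E : (Fin N → Fin m → ℝ) →ₗ[ℝ] (ι → ℝ)),
        ∀ x ∈ X, ∀ u : Fin N → (Fin m → ℝ), (∀ i, u i ∈ U) → iterDyn f N x u = Φ x + E u := by
  constructor
  · rintro ⟨Φ, B, h⟩
    exact ⟨Φ, B.mulVecLin ∘ₗ (LinearEquiv.curry ℝ ℝ (Fin N) (Fin m)).symm.toLinearMap,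
      fun x hx u hu => h x hx u hu⟩
  · rintro ⟨Φ, E, h⟩
    refine ⟨Φ, LinearMap.toMatrix' (E ∘ₗ (LinearEquiv.curry ℝ ℝ (Fin N) (Fin m)).toLinearMap),
      fun x hx u hu => ?_⟩
    rw [h x hx u hu, LinearMap.toMatrix'_mulVec]
    rfl

theorem iterDyn_mem {ι : Type} {m : ℕ} {f : (ι → ℝ) → (Fin m → ℝ) → (ι → ℝ)}
    {X : Set (ι → ℝ)} {U : Set (Fin m → ℝ)} (hf : ∀ x ∈ X, ∀ u ∈ U, f x u ∈ X)
    {x : ι → ℝ} (hx : x ∈ X) {N : ℕ} {u : Fin N → Fin m → ℝ} (hu : ∀ i, u i ∈ U) :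
    iterDyn f N x u ∈ X := by
  induction N with
  | zero => exact hx
  | succ N ih => exact hf _ (ih fun i => hu _) _ (hu _)

theorem exists_iterDyn_eq {ι : Type} {m : ℕ} {f : (ι → ℝ) → (Fin m → ℝ) → (ι → ℝ)}
    {X : Set (ι → ℝ)} {U : Set (Fin m → ℝ)}
    (hsurj : ∀ y ∈ X, ∃ x ∈ X, ∃ u ∈ U, f x u = y) (N : ℕ) {y : ι → ℝ} (hy : y ∈ X) :
    ∃ x ∈ X, ∃ u : Fin N → Fin m → ℝ, (∀ i, u i ∈ U) ∧ iterDyn f N x u = y := by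
  induction N generalizing y with
  | zero => exact ⟨y, hy, Fin.elim0, fun i => i.elim0, rfl⟩
  | succ N ih =>
    obtain ⟨z, hz, w, hw, rfl⟩ := hsurj y hy
    obtain ⟨x, hx, u, hu, rfl⟩ := ih hz
    refine ⟨x, hx, Fin.snoc u w, fun i => ?_, ?_⟩
    · induction i using Fin.lastCases with
      | last => simpa using hw
      | cast i => simpa using hu i
    · simp [iterDyn]

/-- A CAP structure yields linear predictors over every horizon. -/
theorem HasCAP.hasNStepLinearPredictor {ι : Type} [Fintype ι] [DecidableEq ι] {m : ℕ}
    {f : (ι → ℝ) → (Fin m → ℝ) → (ι → ℝ)} {X : Set (ι → ℝ)} {U : Set (Fin m → ℝ)}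
    (hf : ∀ x ∈ X, ∀ u ∈ U, f x u ∈ X) (hcap : HasCAP f X U) (N : ℕ) :
    HasNStepLinearPredictor f X U N := by
  obtain ⟨n₁, n₂, T, S, -, hST, g, h, C, D, hfT⟩ := hcap
  have key : ∃ (a : (ι → ℝ) → (Fin n₁ → ℝ)) (c : (ι → ℝ) → (Fin n₂ → ℝ))
      (E : (Fin N → Fin m → ℝ) →ₗ[ℝ] (Fin n₁ → ℝ)),
      ∀ x ∈ X, ∀ u : Fin N → (Fin m → ℝ), (∀ i, u i ∈ U) →
        T *ᵥ iterDyn f N x u = Sum.elim (a x + E u) (c x) := by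
    induction N with
    | zero =>
      refine ⟨fun x i => (T *ᵥ x) (Sum.inl i), fun x i => (T *ᵥ x) (Sum.inr i), 0,
        fun x _ u _ => ?_⟩
      ext (i | i) <;> simp [iterDyn]
    | succ N ih =>
      obtain ⟨a, c, E, hE⟩ := ih
      refine ⟨fun x => g (c x) + C *ᵥ a x, fun x => h (c x),
        C.mulVecLin ∘ₗ E ∘ₗ LinearMap.funLeft ℝ (Fin m → ℝ) Fin.castSucc
          + D.mulVecLin ∘ₗ LinearMap.proj (Fin.last N), fun x hx u hu => ?_⟩
      have hstep := hE x hx (fun i => u i.castSucc) fun i => hu _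
      rw [iterDyn, hfT _ (iterDyn_mem hf hx fun i => hu _) _ (hu _), hstep]
      simp only [Sum.elim_inl, Sum.elim_inr]
      congr 1
      change g (c x) + C *ᵥ (a x + E fun i => u i.castSucc) + D *ᵥ u (Fin.last N) =
        g (c x) + C *ᵥ a x + (C *ᵥ (E fun i => u i.castSucc) + D *ᵥ u (Fin.last N))
      rw [mulVec_add]
      abel
  obtain ⟨a, c, E, hE⟩ := key
  rw [hasNStepLinearPredictor_iff_linearMap]
  refine ⟨fun x => S *ᵥ Sum.elim (a x) (c x),
    S.mulVecLin ∘ₗ (LinearEquiv.sumArrowLequivProdArrow (Fin n₁) (Fin n₂) ℝ ℝ).symm.toLinearMap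
      ∘ₗ LinearMap.inl ℝ _ _ ∘ₗ E, fun x hx u hu => ?_⟩
  calc iterDyn f N x u = S *ᵥ (T *ᵥ iterDyn f N x u) := by simp [hST]
    _ = S *ᵥ (Sum.elim (a x) (c x) + Sum.elim (E u) 0) := by
      rw [hE x hx u hu]
      congr 1
      ext (i | i) <;> simp
    _ = S *ᵥ Sum.elim (a x) (c x) + S *ᵥ Sum.elim (E u) 0 := mulVec_add _ _ _

/-- On a convex open set, increments that are locally linear along a direction with a fixed slope
are globally so. -/
theorem eq_add_smul_of_eventually {E F : Type*} [AddCommGroup E] [Module ℝ E]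
    [TopologicalSpace E] [IsTopologicalAddGroup E] [ContinuousSMul ℝ E]
    [AddCommGroup F] [Module ℝ F] {X : Set E} (hX : Convex ℝ X) {φ : E → F} {v : E} {w : F}
    (hloc : ∀ y ∈ X, ∀ᶠ t : ℝ in nhds 0, φ (y + t • v) = φ y + t • w)
    {y : E} (hy : y ∈ X) {t : ℝ} (ht : y + t • v ∈ X) : φ (y + t • v) = φ y + t • w := by
  let I : Set ℝ := {s | y + s • v ∈ X}
  have hI : Convex ℝ I := by
    intro a ha b hb p q hp hq hpq
    have := hX ha hb hp hq hpq
    have e : p • (y + a • v) + q • (y + b • v) = y + (p • a + q • b) • v := by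
      calc _ = (p + q) • y + (p • a + q • b) • v := by
            simp only [smul_eq_mul]
            module
        _ = _ := by rw [hpq, one_smul]
    rw [e] at this
    exact this
  have hconst : IsLocallyConstant fun s : I => φ (y + (s : ℝ) • v) - (s : ℝ) • w := by
    rw [IsLocallyConstant.iff_eventually_eq]
    rintro ⟨s, hs⟩
    have htend : Filter.Tendsto (fun r : I => (r : ℝ) - s) (nhds ⟨s, hs⟩) (nhds 0) := by
      have : Continuous fun r : I => (r : ℝ) - s := by fun_prop
      simpa using this.tendsto ⟨s, hs⟩
    filter_upwards [htend.eventually (hloc _ hs)] with r hr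
    have e : y + s • v + ((r : ℝ) - s) • v = y + (r : ℝ) • v := by module
    rw [e] at hr
    rw [hr]
    module
  have : PreconnectedSpace I := Subtype.preconnectedSpace hI.isPreconnected
  have h0 : (0 : ℝ) ∈ I := by simpa [I] using hy
  have := hconst.apply_eq_of_isPreconnected isPreconnected_univ
    (Set.mem_univ (⟨t, ht⟩ : I)) (Set.mem_univ (⟨0, h0⟩ : I))
  simp only [zero_smul, add_zero, sub_zero] at this
  rw [← this]
  abel

/-- The pairs `(v, w)` such that `φ` grows with slope `w` in direction `v` throughout `X`. -/
def slopePairs {E F : Type*} [AddCommGroup E] [Module ℝ E]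
    [TopologicalSpace E] [IsTopologicalAddGroup E] [ContinuousSMul ℝ E]
    [AddCommGroup F] [Module ℝ F] {X : Set E} (hXopen : IsOpen X) (hX : Convex ℝ X) (φ : E → F) :
    Submodule ℝ (E × F) where
  carrier := {p | ∀ y ∈ X, ∀ t : ℝ, y + t • p.1 ∈ X → φ (y + t • p.1) = φ y + t • p.2}
  zero_mem' := by
    intro y _ t _
    simp
  add_mem' := by
    rintro ⟨v₁, w₁⟩ ⟨v₂, w₂⟩ h₁ h₂ y hy t ht
    refine eq_add_smul_of_eventually hX (fun y hy => ?_) hy ht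
    have hmem (v : E) : ∀ᶠ t : ℝ in nhds 0, y + t • v ∈ X := by
      have : Continuous fun t : ℝ => y + t • v := by fun_prop
      exact this.continuousAt.eventually_mem (hXopen.mem_nhds (by simpa using hy))
    filter_upwards [hmem v₁, hmem (v₁ + v₂)] with t ht₁ ht₂
    have e : y + t • (v₁ + v₂) = y + t • v₁ + t • v₂ := by module
    simp only [Prod.mk_add_mk]
    rw [e] at ht₂ ⊢
    rw [h₂ _ ht₁ t ht₂, h₁ y hy t ht₁]
    module
  smul_mem' := by
    rintro c ⟨v, w⟩ h y hy t ht
    have := h y hy (t * c) (by simpa [mul_smul] using ht)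
    simpa [mul_smul] using this

/-- Every linear relation restricted to its domain contains the graph of a linear map. -/
theorem exists_linearMap_of_linearRelation {K E F : Type*} [Field K] [AddCommGroup E]
    [Module K E] [AddCommGroup F] [Module K F] (G : Submodule K (E × F)) :
    ∃ M : E →ₗ[K] F, ∀ v ∈ G.map (LinearMap.fst K E F), (v, M v) ∈ G := by
  obtain ⟨s, hs⟩ := LinearMap.exists_rightInverse_of_surjective
    ((LinearMap.fst K E F).submoduleMap G)
    (LinearMap.range_eq_top.2 (LinearMap.submoduleMap_surjective _ _))
  obtain ⟨M, hM⟩ := LinearMap.exists_extend (LinearMap.snd K E F ∘ₗ G.subtype ∘ₗ s)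
  refine ⟨M, fun v hv => ?_⟩
  have h₁ : (s ⟨v, hv⟩ : E × F).1 = v := congrArg Subtype.val (LinearMap.congr_fun hs ⟨v, hv⟩)
  have h₂ : M v = (s ⟨v, hv⟩ : E × F).2 := LinearMap.congr_fun hM ⟨v, hv⟩
  rw [h₂]
  nth_rewrite 1 [← h₁]
  exact (s ⟨v, hv⟩).2

/-- By Cayley–Hamilton, a subspace containing the first `dim E` Krylov vectors of `b` contains all
of them. -/
theorem pow_apply_mem_of_forall_lt_finrank {K E : Type*} [Field K] [AddCommGroup E] [Module K E]
    [FiniteDimensional K E] (M : Module.End K E) (b : E) (W : Submodule K E)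
    (h : ∀ k < Module.finrank K E, (M ^ k) b ∈ W) (k : ℕ) : (M ^ k) b ∈ W := by
  rcases subsingleton_or_nontrivial E with hE | hE
  · rw [Subsingleton.elim ((M ^ k) b) 0]
    exact W.zero_mem
  have hpos : 0 < Module.finrank K E := Module.finrank_pos
  have hdeg : (Polynomial.X ^ k %ₘ M.charpoly).natDegree < Module.finrank K E := by
    rw [← M.charpoly_natDegree]
    refine Polynomial.natDegree_modByMonic_lt _ M.charpoly_monic fun h1 => ?_
    rw [← M.charpoly_natDegree, h1] at hpos
    simp at hpos
  rw [LinearMap.pow_eq_aeval_mod_charpoly, Polynomial.aeval_eq_sum_range' hdeg,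
    LinearMap.sum_apply]
  exact W.sum_mem fun i hi => W.smul_mem _ (h i (Finset.mem_range.1 hi))

/-- The effect on the state of perturbing the first input only. -/
theorem iterDyn_perturb_first {n m : ℕ} {f : (Fin n → ℝ) → (Fin m → ℝ) → (Fin n → ℝ)}
    {X : Set (Fin n → ℝ)} {U : Set (Fin m → ℝ)} (hf : ∀ x ∈ X, ∀ u ∈ U, f x u ∈ X)
    {φ : (Fin n → ℝ) → (Fin n → ℝ)} {B : (Fin m → ℝ) →ₗ[ℝ] (Fin n → ℝ)}
    (hφ : ∀ x ∈ X, ∀ u ∈ U, f x u = φ x + B u) {M : Module.End ℝ (Fin n → ℝ)}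
    {v : Fin m → ℝ} {k : ℕ}
    (hM : ∀ j < k, ∀ y ∈ X, ∀ t : ℝ, y + t • (M ^ j) (B v) ∈ X →
      φ (y + t • (M ^ j) (B v)) = φ y + t • M ((M ^ j) (B v)))
    {x : Fin n → ℝ} (hx : x ∈ X) {u u' : Fin (k + 1) → Fin m → ℝ}
    (hu : ∀ i, u i ∈ U) (hu' : ∀ i, u' i ∈ U) {t : ℝ} (h0 : u' 0 = u 0 + t • v)
    (hne : ∀ i, i ≠ 0 → u' i = u i) :
    iterDyn f (k + 1) x u' = iterDyn f (k + 1) x u + t • (M ^ k) (B v) := by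
  induction k with
  | zero =>
    simp only [iterDyn, Fin.last_zero]
    rw [hφ x hx _ (hu' 0), hφ x hx _ (hu 0), h0]
    simp [add_assoc]
  | succ k ih =>
    have hi := ih (fun j hj => hM j (by omega)) (fun i => hu i.castSucc) (fun i => hu' i.castSucc)
      (by simpa using h0) (fun i hi => hne _ (by simpa using hi))
    have hy : iterDyn f (k + 1) x (fun i => u i.castSucc) ∈ X := iterDyn_mem hf hx fun i => hu _
    have hy' : iterDyn f (k + 1) x (fun i => u' i.castSucc) ∈ X :=
      iterDyn_mem hf hx fun i => hu' _
    change f (iterDyn f (k + 1) x fun i => u' i.castSucc) (u' (Fin.last (k + 1))) =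
      f (iterDyn f (k + 1) x fun i => u i.castSucc) (u (Fin.last (k + 1))) +
        t • (M ^ (k + 1)) (B v)
    rw [hφ _ hy' _ (hu' _), hφ _ hy _ (hu _), hne _ (Fin.last_pos).ne']
    rw [hi] at hy' ⊢
    rw [hM k (by omega) _ hy _ hy', pow_succ', Module.End.mul_apply]
    abel

/-- If the drift is linear along a subspace that contains the input directions and is invariant
under the slope map, then the system has a CAP structure. -/
theorem hasCAP_of_invariant_submodule {n m : ℕ}
    {f : (Fin n → ℝ) → (Fin m → ℝ) → (Fin n → ℝ)}
    {X : Set (Fin n → ℝ)} {U : Set (Fin m → ℝ)}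
    {φ : (Fin n → ℝ) → (Fin n → ℝ)} {B : (Fin m → ℝ) →ₗ[ℝ] (Fin n → ℝ)}
    (hφ : ∀ x ∈ X, ∀ u ∈ U, f x u = φ x + B u) {M : Module.End ℝ (Fin n → ℝ)}
    {V : Submodule ℝ (Fin n → ℝ)} (hB : ∀ v, B v ∈ V) (hMV : ∀ v ∈ V, M v ∈ V)
    (hV : ∀ v ∈ V, ∀ y ∈ X, y + v ∈ X → φ (y + v) = φ y + M v) : HasCAP f X U := by
  classical
  obtain ⟨Q, hVQ⟩ := V.exists_isCompl
  let b := ((Module.finBasis ℝ V).prod (Module.finBasis ℝ Q)).map (V.prodEquivOfIsCompl Q hVQ)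
  let e := b.equivFun
  have he {v : Fin n → ℝ} : (∀ i, e v (Sum.inr i) = 0) ↔ v ∈ V := by
    rw [← V.prodEquivOfIsCompl_symm_apply_snd_eq_zero Q hVQ]
    simp only [e, b, Module.Basis.equivFun_apply, Module.Basis.map_repr,
      LinearEquiv.trans_apply, Module.Basis.prod_repr_inr]
    rw [← (Module.finBasis ℝ Q).repr.map_eq_zero_iff, Finsupp.ext_iff]
    rfl
  let P₁ : (Fin n → ℝ) →ₗ[ℝ] (Fin (Module.finrank ℝ V) → ℝ) :=
    LinearMap.funLeft ℝ ℝ Sum.inl ∘ₗ e.toLinearMap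
  let P₂ : (Fin n → ℝ) →ₗ[ℝ] (Fin (Module.finrank ℝ Q) → ℝ) :=
    LinearMap.funLeft ℝ ℝ Sum.inr ∘ₗ e.toLinearMap
  let J : (Fin (Module.finrank ℝ V) → ℝ) →ₗ[ℝ] (Fin n → ℝ) :=
    e.symm.toLinearMap ∘ₗ (LinearEquiv.sumArrowLequivProdArrow _ _ ℝ ℝ).symm.toLinearMap
      ∘ₗ LinearMap.inl ℝ _ _
  have hP₂ {v : Fin n → ℝ} : P₂ v = 0 ↔ v ∈ V := by rw [← he, funext_iff]; rfl
  have hJ {v : Fin n → ℝ} (hv : v ∈ V) : J (P₁ v) = v := by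
    apply e.injective
    change e (e.symm (Sum.elim (P₁ v) 0)) = e v
    rw [e.apply_symm_apply]
    ext (i | i)
    · rfl
    · exact (he.2 hv i).symm
  let L := P₁ ∘ₗ M ∘ₗ J
  have hL {v : Fin n → ℝ} (hv : v ∈ V) : P₁ (M v) = L (P₁ v) := by simp [L, hJ hv]
  let r : (Fin (Module.finrank ℝ Q) → ℝ) → (Fin n → ℝ) := fun z =>
    if h : ∃ x ∈ X, P₂ x = z then h.choose else 0
  have hr {x : Fin n → ℝ} (hx : x ∈ X) : r (P₂ x) ∈ X ∧ P₂ (r (P₂ x)) = P₂ x := by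
    have h : ∃ y ∈ X, P₂ y = P₂ x := ⟨x, hx, rfl⟩
    simp only [r, dif_pos h]
    exact h.choose_spec
  refine ⟨_, _, LinearMap.toMatrix' e.toLinearMap, LinearMap.toMatrix' e.symm.toLinearMap,
    ?_, ?_, fun z => P₁ (φ (r z)) - L (P₁ (r z)), fun z => P₂ (φ (r z)),
    LinearMap.toMatrix' L, LinearMap.toMatrix' (P₁ ∘ₗ B), fun x hx u hu => ?_⟩
  · rw [← LinearMap.toMatrix'_comp]; simp
  · rw [← LinearMap.toMatrix'_comp]; simp
  simp only [LinearMap.toMatrix'_mulVec]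
  obtain ⟨hrX, hrP⟩ := hr hx
  have hd : x - r (P₂ x) ∈ V := hP₂.1 (by rw [map_sub, hrP, sub_self])
  have hφx : φ x = φ (r (P₂ x)) + M (x - r (P₂ x)) := by
    have := hV _ hd _ hrX (by simpa using hx)
    simpa using this
  have h₁ : P₁ (f x u) = P₁ (φ (r (P₂ x))) - L (P₁ (r (P₂ x))) + L (P₁ x) + P₁ (B u) := by
    rw [hφ x hx u hu, hφx, map_add, map_add, hL hd, map_sub, map_sub]
    abel
  have h₂ : P₂ (f x u) = P₂ (φ (r (P₂ x))) := by
    rw [hφ x hx u hu, hφx, map_add, map_add, hP₂.2 (hB u), hP₂.2 (hMV _ hd), add_zero, add_zero]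
  ext (i | i)
  · exact congrFun h₁ i
  · exact congrFun h₂ i

/-- Linear predictors over horizons up to `n + 1` yield a CAP structure. -/
theorem hasCAP_of_hasNStepLinearPredictor
    {n m : ℕ} {f : (Fin n → ℝ) → (Fin m → ℝ) → (Fin n → ℝ)}
    {X : Set (Fin n → ℝ)} {U : Set (Fin m → ℝ)}
    (hXopen : IsOpen X) (hXconv : Convex ℝ X) (hUopen : IsOpen U)
    (hf : ∀ x ∈ X, ∀ u ∈ U, f x u ∈ X)
    (hsurj : ∀ y ∈ X, ∃ x ∈ X, ∃ u ∈ U, f x u = y)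
    (hpred : ∀ N : ℕ, 1 ≤ N → N ≤ n + 1 → HasNStepLinearPredictor f X U N) : HasCAP f X U := by
  simp only [hasNStepLinearPredictor_iff_linearMap] at hpred
  obtain ⟨φ, E, hE⟩ := hpred 1 le_rfl (by omega)
  let B : (Fin m → ℝ) →ₗ[ℝ] (Fin n → ℝ) := E ∘ₗ LinearMap.pi fun _ => LinearMap.id
  have hφ : ∀ x ∈ X, ∀ u ∈ U, f x u = φ x + B u := fun x hx u hu =>
    hE x hx (fun _ => u) fun _ => hu
  let G := slopePairs hXopen hXconv φ
  obtain ⟨M, hM⟩ := exists_linearMap_of_linearRelation G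
  have hmem (v : Fin m → ℝ) (k : ℕ) (hk : k < n) :
      (M ^ k) (B v) ∈ G.map (LinearMap.fst ℝ _ _) := by
    induction k using Nat.strong_induction_on with
    | _ k ih =>
    obtain ⟨Φ, A, hA⟩ := hpred (k + 2) (by omega) (by omega)
    refine ⟨((M ^ k) (B v), A (Pi.single 0 v)), ?_, rfl⟩
    intro y hy t ht
    refine eq_add_smul_of_eventually hXconv (fun y hy => ?_) hy ht
    obtain ⟨x, hx, u, hu, rfl⟩ := exists_iterDyn_eq hsurj (k + 1) hy
    have hev : ∀ᶠ t : ℝ in nhds 0, u 0 + t • v ∈ U := by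
      have : Continuous fun t : ℝ => u 0 + t • v := by fun_prop
      exact this.continuousAt.eventually_mem (hUopen.mem_nhds (by simpa using hu 0))
    filter_upwards [hev] with t ht
    let u' : Fin (k + 1) → Fin m → ℝ := Function.update u 0 (u 0 + t • v)
    have hu' : ∀ i, u' i ∈ U := by
      intro i
      rcases eq_or_ne i 0 with rfl | hi
      · simpa [u'] using ht
      · simpa [u', hi] using hu i
    have hpert : iterDyn f (k + 1) x u' = iterDyn f (k + 1) x u + t • (M ^ k) (B v) :=
      iterDyn_perturb_first hf hφ (fun j hj => hM _ (ih j hj (by omega))) hx hu hu'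
        (by simp [u']) (fun i hi => by simp [u', hi])
    have hsnoc (w : Fin (k + 1) → Fin m → ℝ) (hw : ∀ i, w i ∈ U) :
        φ (iterDyn f (k + 1) x w) + B (u 0) = Φ x + A (Fin.snoc w (u 0)) := by
      rw [← hφ _ (iterDyn_mem hf hx hw) _ (hu 0), ← hA x hx]
      · simp [iterDyn]
      · intro i
        induction i using Fin.lastCases with
        | last => simpa using hu 0
        | cast i => simpa using hw i
    have hdiff : (Fin.snoc u' (u 0) : Fin (k + 2) → Fin m → ℝ) =
        (Fin.snoc u (u 0) : Fin (k + 2) → Fin m → ℝ) +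
          t • (Pi.single 0 v : Fin (k + 2) → Fin m → ℝ) := by
      funext i
      induction i using Fin.lastCases with
      | last => simp
      | cast i =>
        rcases eq_or_ne i 0 with rfl | hi
        · simp [u']
        · simp [u', hi]
    have h₁ := hsnoc u hu
    have h₂ := hsnoc u' hu'
    rw [hdiff, map_add, map_smul, ← add_assoc, ← h₁, hpert] at h₂
    rw [← sub_eq_zero] at h₂ ⊢
    rw [← h₂]
    abel
  let V : Submodule ℝ (Fin n → ℝ) := ⨆ k : ℕ, LinearMap.range ((M ^ k) ∘ₗ B)
  have hVk (k : ℕ) : LinearMap.range ((M ^ k) ∘ₗ B) ≤ V :=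
    le_iSup (fun k : ℕ => LinearMap.range ((M ^ k) ∘ₗ B)) k
  have hVW : V ≤ G.map (LinearMap.fst ℝ _ _) := by
    refine iSup_le fun k => ?_
    rintro _ ⟨v, rfl⟩
    exact pow_apply_mem_of_forall_lt_finrank M (B v) _
      (fun k hk => hmem v k (by simpa using hk)) k
  have hMV : V ≤ V.comap M := by
    refine iSup_le fun k => ?_
    rintro _ ⟨v, rfl⟩
    exact hVk (k + 1) ⟨v, by simp [pow_succ']⟩
  refine hasCAP_of_invariant_submodule (V := V) hφ (fun v => hVk 0 ⟨v, by simp⟩) hMV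
    fun v hv y hy hyv => ?_
  simpa using hM v (hVW hv) y hy 1 (by simpa using hyv)

/-- **Equivalence of `(n+1)`-step linear predictability and the CAP structure.**
For a system `x⁺ = f(x,u)` with `𝒳 ⊆ ℝ^n` open and convex, `𝒰` open, and `f : 𝒳 × 𝒰 → 𝒳`
surjective, the system admits `N`-step linear predictors for all `N ∈ {1, …, n+1}` if and
only if it admits a control-affine preserved (CAP) structure. -/
theorem nStep_linear_predictors_iff_CAP
    {n m : ℕ} (f : (Fin n → ℝ) → (Fin m → ℝ) → (Fin n → ℝ))
    (X : Set (Fin n → ℝ)) (U : Set (Fin m → ℝ))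
    (hXopen : IsOpen X) (hXconv : Convex ℝ X) (hUopen : IsOpen U)
    (hf : ∀ x ∈ X, ∀ u ∈ U, f x u ∈ X)
    (hsurj : ∀ y ∈ X, ∃ x ∈ X, ∃ u ∈ U, f x u = y) :
    (∀ N : ℕ, 1 ≤ N → N ≤ n + 1 → HasNStepLinearPredictor f X U N) ↔ HasCAP f X U := by
  exact ⟨hasCAP_of_hasNStepLinearPredictor hXopen hXconv hUopen hf hsurj,
    fun h N _ _ => h.hasNStepLinearPredictor hf N⟩
end
end

section
/- (Sufficiency of the CAP structure for ∞-step linear prediction.) If a discrete-time controlled system x⁺ = f(x,u) admits a control-affine preserved (CAP) structure, then it admits an N-step linear predictor for every N ≥ 1. -/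
open Matrix

noncomputable section

/-- For a CAP system, in the transformed coordinates, the second block of the `N`-step state is
independent of the inputs and the first block is affine in them with a constant linear part. -/
theorem iterDyn_mem_and_mulVec_eq {ι : Type} [Fintype ι] {m n₁ n₂ : ℕ}
    {f : (ι → ℝ) → (Fin m → ℝ) → (ι → ℝ)} {X : Set (ι → ℝ)} {U : Set (Fin m → ℝ)}
    (hf : ∀ x ∈ X, ∀ u ∈ U, f x u ∈ X) {T : Matrix (Fin n₁ ⊕ Fin n₂) ι ℝ}
    {g : (Fin n₂ → ℝ) → (Fin n₁ → ℝ)} {h : (Fin n₂ → ℝ) → (Fin n₂ → ℝ)}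
    {C : Matrix (Fin n₁) (Fin n₁) ℝ} {D : Matrix (Fin n₁) (Fin m) ℝ}
    (hT : ∀ x ∈ X, ∀ u ∈ U,
      T.mulVec (f x u) =
        Sum.elim
          (g (fun i => T.mulVec x (Sum.inr i)) +
            C.mulVec (fun i => T.mulVec x (Sum.inl i)) + D.mulVec u)
          (h (fun i => T.mulVec x (Sum.inr i)))) (N : ℕ) :
    ∃ (φ : (ι → ℝ) → (Fin n₁ → ℝ)) (ψ : (ι → ℝ) → (Fin n₂ → ℝ))
      (L : (Fin N → Fin m → ℝ) →ₗ[ℝ] (Fin n₁ → ℝ)),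
      ∀ x ∈ X, ∀ u : Fin N → (Fin m → ℝ), (∀ i, u i ∈ U) →
        iterDyn f N x u ∈ X ∧ T.mulVec (iterDyn f N x u) = Sum.elim (φ x + L u) (ψ x) := by
  induction N with
  | zero =>
    refine ⟨fun x i => T.mulVec x (Sum.inl i), fun x i => T.mulVec x (Sum.inr i), 0,
      fun x hx u _ => ⟨hx, ?_⟩⟩
    ext (i | i) <;> simp [iterDyn]
  | succ N ih =>
    obtain ⟨φ, ψ, L, hL⟩ := ih
    refine ⟨fun x => g (ψ x) + C.mulVec (φ x), fun x => h (ψ x),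
      C.mulVecLin ∘ₗ L ∘ₗ LinearMap.funLeft ℝ (Fin m → ℝ) Fin.castSucc +
        D.mulVecLin ∘ₗ LinearMap.proj (Fin.last N), fun x hx u hu => ?_⟩
    obtain ⟨hmem, heq⟩ := hL x hx (fun i => u i.castSucc) fun i => hu _
    refine ⟨hf _ hmem _ (hu _), ?_⟩
    have hu' : LinearMap.funLeft ℝ (Fin m → ℝ) Fin.castSucc u = fun i => u i.castSucc := rfl
    rw [iterDyn, hT _ hmem _ (hu _), heq]
    simp only [Sum.elim_inl, Sum.elim_inr, LinearMap.add_apply, LinearMap.comp_apply, hu',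
      Matrix.mulVecLin_apply, LinearMap.proj_apply, Matrix.mulVec_add, add_assoc]

/-- **Sufficiency of the CAP structure for ∞-step linear prediction.**  If a system
`x⁺ = f(x,u)` admits a control-affine preserved (CAP) structure, then it admits an
`N`-step linear predictor for every `N ≥ 1`. -/
theorem CAP_implies_infinite_step_linear_prediction
    {n m : ℕ} (f : (Fin n → ℝ) → (Fin m → ℝ) → (Fin n → ℝ))
    (X : Set (Fin n → ℝ)) (U : Set (Fin m → ℝ))
    (hf : ∀ x ∈ X, ∀ u ∈ U, f x u ∈ X)
    (hcap : HasCAP f X U) :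
    ∀ N : ℕ, 1 ≤ N → HasNStepLinearPredictor f X U N := by
  intro N _
  obtain ⟨n₁, n₂, T, S, -, hST, g, h, C, D, hT⟩ := hcap
  obtain ⟨φ, ψ, L, hL⟩ := iterDyn_mem_and_mulVec_eq hf hT N
  let E : (Fin n₁ → ℝ) →ₗ[ℝ] (Fin n₁ ⊕ Fin n₂ → ℝ) :=
    (LinearEquiv.sumArrowLequivProdArrow (Fin n₁) (Fin n₂) ℝ ℝ).symm.toLinearMap ∘ₗ
      LinearMap.inl ℝ _ _
  have hE : ∀ v, E v = Sum.elim v 0 := fun v => by ext (i | i) <;> simp [E]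
  refine ⟨fun x => S.mulVec (Sum.elim (φ x) (ψ x)),
    LinearMap.toMatrix' (S.mulVecLin ∘ₗ E ∘ₗ L ∘ₗ
      (LinearEquiv.curry ℝ ℝ (Fin N) (Fin m)).toLinearMap), fun x hx u hu => ?_⟩
  have hcurry : LinearEquiv.curry ℝ ℝ (Fin N) (Fin m) (fun p => u p.1 p.2) = u := rfl
  calc iterDyn f N x u = S.mulVec (T.mulVec (iterDyn f N x u)) := by
        rw [Matrix.mulVec_mulVec, hST, Matrix.one_mulVec]
    _ = S.mulVec (Sum.elim (φ x) (ψ x) + Sum.elim (L u) 0) := by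
        rw [(hL x hx u hu).2]
        congr 1
        ext (i | i) <;> simp
    _ = _ := by
        rw [LinearMap.toMatrix'_mulVec, Matrix.mulVec_add]
        simp only [LinearMap.comp_apply, LinearEquiv.coe_coe, hcurry, hE, Matrix.mulVecLin_apply]
end
end

section
/- (Two-layer affine recursion with full-row-rank coefficient.) Let 𝒳 ⊆ ℝ^n be open and convex, 𝒰 ⊆ ℝ^m be open, Φ : 𝒳 → ℝ^n be an arbitrary function, and B ∈ ℝ^{n×m} have full row rank. Suppose (A1) Φ(x) + Bu ∈ 𝒳 for all x ∈ 𝒳, u ∈ 𝒰, and the map (x,u) ↦ Φ(x) + Bu from 𝒳 × 𝒰 to 𝒳 is surjective; and (A2) there exist a function Φ̃ : 𝒳 → ℝ^n and a matrix B̃ ∈ ℝ^{n×m} such that Φ(Φ(x) + Bu) = Φ̃(x) + B̃u for all x ∈ 𝒳 and u ∈ 𝒰. Then Φ is affine on 𝒳: there exist C ∈ ℝ^{n×n} and v ∈ ℝ^n such that Φ(x) = Cx + v for all x ∈ 𝒳. -/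
open Matrix

noncomputable section

/-- A matrix of full row rank has a right inverse. -/
theorem Matrix.exists_mul_eq_one_of_rank_eq {n m : ℕ} (B : Matrix (Fin n) (Fin m) ℝ)
    (hB : B.rank = n) : ∃ R : Matrix (Fin m) (Fin n) ℝ, B * R = 1 := by
  have hrange : LinearMap.range B.mulVecLin = ⊤ :=
    Submodule.eq_top_of_finrank_eq (by simpa [Matrix.rank] using hB)
  obtain ⟨g, hg⟩ := B.mulVecLin.exists_rightInverse_of_surjective hrange
  refine ⟨LinearMap.toMatrix' g, ?_⟩
  have h := congrArg LinearMap.toMatrix' hg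
  rwa [LinearMap.toMatrix'_comp, LinearMap.toMatrix'_id, ← Matrix.toLin'_apply',
    LinearMap.toMatrix'_toLin'] at h

/-- A function on an open preconnected set that is constant near each point is constant. -/
theorem IsOpen.eq_of_eventuallyEq_const {E F : Type*} [NormedAddCommGroup E] [NormedSpace ℝ E]
    [NormedAddCommGroup F] [NormedSpace ℝ F] {s : Set E} (hs : IsOpen s) (hs' : IsPreconnected s)
    {f : E → F} (hf : ∀ y ∈ s, ∀ᶠ z in nhds y, f z = f y) {x y : E} (hx : x ∈ s) (hy : y ∈ s) :
    f x = f y := by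
  have hd : ∀ y ∈ s, HasFDerivAt f (0 : E →L[ℝ] F) y := fun y hy =>
    (hasFDerivAt_const (f y) y).congr_of_eventuallyEq (hf y hy)
  exact hs.is_const_of_fderiv_eq_zero hs'
    (fun y hy => (hd y hy).differentiableAt.differentiableWithinAt)
    (fun y hy => (hd y hy).fderiv) hx hy

/-- **Two-layer affine recursion with full-row-rank coefficient.**
Let `𝒳 ⊆ ℝ^n` be open and convex, `𝒰 ⊆ ℝ^m` open, `Φ : 𝒳 → ℝ^n` arbitrary, and
`B ∈ ℝ^{n×m}` of full row rank.  If (A1) `(x,u) ↦ Φ(x) + Bu` maps `𝒳 × 𝒰` into `𝒳` and is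
surjective onto `𝒳`, and (A2) `Φ(Φ(x) + Bu) = Φ̃(x) + B̃u` on `𝒳 × 𝒰` for some function `Φ̃`
and matrix `B̃`, then `Φ` is affine on `𝒳`: `Φ(x) = Cx + v` for all `x ∈ 𝒳`. -/
theorem two_layer_affine_recursion_full_row_rank
    {n m : ℕ} (X : Set (Fin n → ℝ)) (U : Set (Fin m → ℝ))
    (hXopen : IsOpen X) (hXconv : Convex ℝ X) (hUopen : IsOpen U)
    (Φ : (Fin n → ℝ) → (Fin n → ℝ)) (B : Matrix (Fin n) (Fin m) ℝ)
    (hB : B.rank = n)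
    (hmem : ∀ x ∈ X, ∀ u ∈ U, Φ x + B.mulVec u ∈ X)
    (hsurj : ∀ y ∈ X, ∃ x ∈ X, ∃ u ∈ U, Φ x + B.mulVec u = y)
    (Φt : (Fin n → ℝ) → (Fin n → ℝ)) (Bt : Matrix (Fin n) (Fin m) ℝ)
    (hrec : ∀ x ∈ X, ∀ u ∈ U, Φ (Φ x + B.mulVec u) = Φt x + Bt.mulVec u) :
    ∃ (C : Matrix (Fin n) (Fin n) ℝ) (v : Fin n → ℝ),
      ∀ x ∈ X, Φ x = C.mulVec x + v := by
  obtain ⟨R, hR⟩ := B.exists_mul_eq_one_of_rank_eq hB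
  have hloc : ∀ y ∈ X, ∀ᶠ z in nhds y,
      Φ z - (Bt * R).mulVec z = Φ y - (Bt * R).mulVec y := by
    intro y hy
    obtain ⟨x, hx, u, hu, rfl⟩ := hsurj y hy
    set y := Φ x + B.mulVec u with hy_def
    have hcont : Continuous fun z => u + R.mulVec (z - y) := by fun_prop
    have hev : ∀ᶠ z in nhds y, u + R.mulVec (z - y) ∈ U :=
      hcont.continuousAt.eventually_mem (hUopen.mem_nhds (by simpa using hu))
    filter_upwards [hev] with z hz
    have hz_eq : Φ x + B.mulVec (u + R.mulVec (z - y)) = z := by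
      rw [Matrix.mulVec_add, Matrix.mulVec_mulVec, hR, Matrix.one_mulVec, ← add_assoc, ← hy_def]
      abel
    have h₁ := hrec x hx _ hz
    rw [hz_eq, Matrix.mulVec_add, Matrix.mulVec_mulVec, Matrix.mulVec_sub] at h₁
    rw [h₁, hrec x hx u hu]
    abel
  rcases X.eq_empty_or_nonempty with rfl | ⟨x₀, hx₀⟩
  · exact ⟨0, 0, by simp⟩
  · refine ⟨Bt * R, Φ x₀ - (Bt * R).mulVec x₀, fun x hx => ?_⟩
    rw [← hXopen.eq_of_eventuallyEq_const hXconv.isPreconnected hloc hx hx₀]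
    abel
end
end

section
/- (Principle of affine composition.) Let 𝒳 ⊆ ℝ^n and 𝒰 ⊆ ℝ^m be open sets, g₁ : 𝒳 → ℝ^{n₁} and l₁ : 𝒳 → ℝ^{n₂} be arbitrary functions, and C₁ ∈ ℝ^{n₁×m} have full row rank. Define 𝒳̄ := { (x₁, x₂) ∈ ℝ^{n₁+n₂} : (x₁, x₂) = (g₁(x) + C₁u, l₁(x)) for some x ∈ 𝒳, u ∈ 𝒰 }, and let f : 𝒳̄ → ℝ^{n₃} be an arbitrary function. Suppose (A1) 𝒳̄ is open and convex; and (A2) there exist a function g₂ : 𝒳 → ℝ^{n₃} and a matrix C₂ ∈ ℝ^{n₃×m} such that f(g₁(x) + C₁u, l₁(x)) = g₂(x) + C₂u for all x ∈ 𝒳 and u ∈ 𝒰. Then f is affine in its first argument on 𝒳̄: there exist a matrix C ∈ ℝ^{n₃×n₁} and a function g : proj_{x₂}(𝒳̄) → ℝ^{n₃} such that f(x₁, x₂) = Cx₁ + g(x₂) for all (x₁, x₂) ∈ 𝒳̄. -/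
open Matrix

noncomputable section

/-- A real matrix of full row rank has a right inverse. -/
theorem exists_right_inverse_of_rank_eq {k m : ℕ} (A : Matrix (Fin k) (Fin m) ℝ)
    (hA : A.rank = k) : ∃ R : Matrix (Fin m) (Fin k) ℝ, A * R = 1 := by
  rw [← Matrix.mulVec_surjective_iff_exists_right_inverse]
  have htop : LinearMap.range A.mulVecLin = ⊤ := by
    apply Submodule.eq_top_of_finrank_eq
    rw [Module.finrank_fin_fun]
    exact hA
  exact LinearMap.range_eq_top.mp htop

/-- If `B *ᵥ ·` is constant on the fibre of `A *ᵥ ·` through `u` within an open set containing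
`u`, then the kernel of `A` is contained in the kernel of `B`. -/
theorem mulVec_eq_zero_of_local {k l m : ℕ} (A : Matrix (Fin k) (Fin m) ℝ)
    (B : Matrix (Fin l) (Fin m) ℝ) {U : Set (Fin m → ℝ)} (hU : IsOpen U) {u : Fin m → ℝ}
    (hu : u ∈ U) (h : ∀ w ∈ U, A *ᵥ w = A *ᵥ u → B *ᵥ w = B *ᵥ u) {v : Fin m → ℝ}
    (hv : A *ᵥ v = 0) : B *ᵥ v = 0 := by
  have hcont : Continuous fun t : ℝ => u + t • v := by fun_prop
  have hev : ∀ᶠ t : ℝ in nhds 0, u + t • v ∈ U :=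
    hcont.continuousAt.eventually (hU.mem_nhds (by simpa using hu))
  obtain ⟨ε, hε, hball⟩ := Metric.eventually_nhds_iff.mp hev
  have hmem : u + (ε / 2) • v ∈ U := by
    apply hball
    rw [Real.dist_eq, sub_zero, abs_of_pos (by positivity)]
    linarith
  have hB := h _ hmem (by rw [mulVec_add, mulVec_smul, hv, smul_zero, add_zero])
  rw [mulVec_add, mulVec_smul, add_eq_left] at hB
  exact (smul_eq_zero.mp hB).resolve_left (by positivity)

/-- **Principle of affine composition.**  Let `𝒳 ⊆ ℝ^n` and `𝒰 ⊆ ℝ^m` be open, `g₁`, `l₁`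
arbitrary functions, and `C₁ ∈ ℝ^{n₁×m}` of full row rank.  Let
`𝒳̄ = {(g₁(x) + C₁u, l₁(x)) : x ∈ 𝒳, u ∈ 𝒰}` and let `f : 𝒳̄ → ℝ^{n₃}` be arbitrary.
If (A1) `𝒳̄` is open and convex, and (A2) `f(g₁(x) + C₁u, l₁(x)) = g₂(x) + C₂u` on `𝒳 × 𝒰`,
then `f` is affine in its first argument on `𝒳̄`: `f(x₁,x₂) = Cx₁ + g(x₂)` for all
`(x₁,x₂) ∈ 𝒳̄`. -/
theorem principle_of_affine_composition
    {n m n₁ n₂ n₃ : ℕ} (X : Set (Fin n → ℝ)) (U : Set (Fin m → ℝ))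
    (hXopen : IsOpen X) (hUopen : IsOpen U)
    (g₁ : (Fin n → ℝ) → Fin n₁ → ℝ) (l₁ : (Fin n → ℝ) → Fin n₂ → ℝ)
    (C₁ : Matrix (Fin n₁) (Fin m) ℝ) (hC₁ : C₁.rank = n₁)
    (Xb : Set ((Fin n₁ → ℝ) × (Fin n₂ → ℝ)))
    (hXb : Xb = {p | ∃ x ∈ X, ∃ u ∈ U, p = (g₁ x + C₁.mulVec u, l₁ x)})
    (f : (Fin n₁ → ℝ) → (Fin n₂ → ℝ) → Fin n₃ → ℝ)
    (hXbopen : IsOpen Xb) (hXbconv : Convex ℝ Xb)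
    (g₂ : (Fin n → ℝ) → Fin n₃ → ℝ) (C₂ : Matrix (Fin n₃) (Fin m) ℝ)
    (hrec : ∀ x ∈ X, ∀ u ∈ U, f (g₁ x + C₁.mulVec u) (l₁ x) = g₂ x + C₂.mulVec u) :
    ∃ (C : Matrix (Fin n₃) (Fin n₁) ℝ) (g : (Fin n₂ → ℝ) → Fin n₃ → ℝ),
      ∀ p ∈ Xb, f p.1 p.2 = C.mulVec p.1 + g p.2 := by
  obtain ⟨R, hR⟩ := exists_right_inverse_of_rank_eq C₁ hC₁
  have hRv (y : Fin n₁ → ℝ) : C₁ *ᵥ (R *ᵥ y) = y := by rw [mulVec_mulVec, hR, one_mulVec]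
  have hfactor : ∀ x ∈ X, ∀ u ∈ U, ∀ w, (C₂ * R) *ᵥ (C₁ *ᵥ w) = C₂ *ᵥ w := by
    intro x hx u hu w
    have hzero : C₂ *ᵥ (R *ᵥ (C₁ *ᵥ w) - w) = 0 := by
      refine mulVec_eq_zero_of_local C₁ C₂ hUopen hu (fun z hz hzu => ?_)
        (by rw [mulVec_sub, hRv, sub_self])
      have heq := hrec x hx z hz
      rw [hzu, hrec x hx u hu] at heq
      exact (add_left_cancel heq).symm
    rw [mulVec_sub, sub_eq_zero, mulVec_mulVec] at hzero
    exact hzero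
  have hconst : ∀ y z b, (y, b) ∈ Xb → (z, b) ∈ Xb →
      f y b - (C₂ * R) *ᵥ y = f z b - (C₂ * R) *ᵥ z := by
    intro y z b hy hz
    have hconv : Convex ℝ {a | (a, b) ∈ Xb} := by
      intro p hp q hq s t hs ht hst
      have hmem := hXbconv hp hq hs ht hst
      rwa [Prod.smul_mk, Prod.smul_mk, Prod.mk_add_mk, Convex.combo_self hst] at hmem
    refine hconv.isPreconnected.induction₂
      (fun y z => f y b - (C₂ * R) *ᵥ y = f z b - (C₂ * R) *ᵥ z) ?_
      (fun _ _ _ _ _ _ => Eq.trans) (fun _ _ _ _ => Eq.symm) hy hz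
    intro a ha
    rw [Set.mem_ofPred_eq, hXb] at ha
    obtain ⟨x, hx, u, hu, hp⟩ := ha
    obtain ⟨rfl, rfl⟩ := Prod.mk.inj hp
    have hpiece : ∀ w ∈ U, f (g₁ x + C₁ *ᵥ w) (l₁ x) - (C₂ * R) *ᵥ (g₁ x + C₁ *ᵥ w)
        = g₂ x - (C₂ * R) *ᵥ g₁ x := by
      intro w hw
      rw [hrec x hx w hw, mulVec_add, hfactor x hx u hu, add_sub_add_right_eq_sub]
    -- Near `g₁ x + C₁ u`, every point is `g₁ x + C₁ w` with `w ∈ U` obtained through `R`.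
    have hcont : Continuous fun c : Fin n₁ → ℝ => u + R *ᵥ (c - (g₁ x + C₁ *ᵥ u)) := by
      fun_prop
    have hev := (hcont.continuousAt (x := g₁ x + C₁ *ᵥ u)).eventually
      (hUopen.mem_nhds (by simpa using hu))
    filter_upwards [nhdsWithin_le_nhds hev] with c hc
    have hcw : g₁ x + C₁ *ᵥ (u + R *ᵥ (c - (g₁ x + C₁ *ᵥ u))) = c := by
      rw [mulVec_add, hRv]
      abel
    have hfc := hpiece _ hc
    rw [hcw] at hfc
    rw [hpiece u hu, hfc]
  classical
  refine ⟨C₂ * R, fun b => if h : ∃ a, (a, b) ∈ Xb then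
    f h.choose b - (C₂ * R) *ᵥ h.choose else 0, ?_⟩
  rintro ⟨a, b⟩ hp
  have h : ∃ a, (a, b) ∈ Xb := ⟨a, hp⟩
  simp only [dif_pos h]
  rw [← hconst a _ b hp h.choose_spec, add_sub_cancel]
end
end

section
/- (Observable Koopman linear embedding.) Consider a discrete-time controlled system x⁺ = f(x,u), and suppose it admits a Koopman linear embedding with lifting function Ψ : 𝒳 → ℝ^{n_z} and matrices (A_K, B_K, C_K), where the pair (A_K, C_K) is not observable. Then the system also admits a Koopman linear embedding with another lifting function Ψ̄ : 𝒳 → ℝ^{n̄_z} and matrices (Ā_K, B̄_K, C̄_K), i.e., Ψ̄(f(x,u)) = Ā_K Ψ̄(x) + B̄_K u and x = C̄_K Ψ̄(x) for all x ∈ 𝒳, u ∈ 𝒰, such that the pair (Ā_K, C̄_K) is observable. -/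
open Matrix

noncomputable section

/-- `Ψ, A, B, C` form a Koopman linear embedding of the system `x⁺ = f(x,u)` on `X`, `U`. -/
def IsKoopmanLinearEmbedding {n m nz : ℕ}
    (f : (Fin n → ℝ) → (Fin m → ℝ) → (Fin n → ℝ))
    (X : Set (Fin n → ℝ)) (U : Set (Fin m → ℝ))
    (Ψ : (Fin n → ℝ) → Fin nz → ℝ)
    (A : Matrix (Fin nz) (Fin nz) ℝ) (B : Matrix (Fin nz) (Fin m) ℝ)
    (C : Matrix (Fin n) (Fin nz) ℝ) : Prop :=
  LinearIndependent ℝ (fun i : Fin nz => fun x : X => Ψ (x : Fin n → ℝ) i) ∧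
  (∀ x ∈ X, ∀ u ∈ U, Ψ (f x u) = A.mulVec (Ψ x) + B.mulVec u) ∧
  (∀ x ∈ X, x = C.mulVec (Ψ x))

/-- The matrix pair `(A, C)` is observable: the observability matrix
`col(C, CA, …, CA^{p−1})` has rank `p`. -/
def Observable {p q : ℕ} (A : Matrix (Fin p) (Fin p) ℝ)
    (C : Matrix (Fin q) (Fin p) ℝ) : Prop :=
  (Matrix.of fun il : Fin p × Fin q => fun j : Fin p =>
      (C * A ^ (il.1 : ℕ)) il.2 j).rank = p

/-- A pair `(A, C)` is observable as soon as no nonzero vector is annihilated by every `C A ^ k`;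
by Cayley–Hamilton only the powers below the dimension matter. -/
theorem observable_of_forall_pow {p q : ℕ} {A : Matrix (Fin p) (Fin p) ℝ}
    {C : Matrix (Fin q) (Fin p) ℝ}
    (h : ∀ w, (∀ k : ℕ, (C * A ^ k) *ᵥ w = 0) → w = 0) : Observable A C := by
  unfold Observable
  have hinj : Function.Injective (Matrix.of fun il : Fin p × Fin q => fun j : Fin p =>
      (C * A ^ (il.1 : ℕ)) il.2 j).mulVecLin := by
    rw [← LinearMap.ker_eq_bot, LinearMap.ker_eq_bot']
    intro w hw
    have hlow : ∀ k < p, (C * A ^ k) *ᵥ w = 0 := fun k hk => by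
      ext l
      exact congrFun hw (⟨k, hk⟩, l)
    refine h w fun k => ?_
    rcases Nat.eq_zero_or_pos p with rfl | hp
    · rw [Subsingleton.elim w 0, mulVec_zero]
    have hdeg : (Polynomial.X ^ k %ₘ A.charpoly).natDegree < p := by
      have hcard : A.charpoly.natDegree = p := by
        rw [A.charpoly_natDegree_eq_dim, Fintype.card_fin]
      have hlt := Polynomial.natDegree_modByMonic_lt (Polynomial.X ^ k) A.charpoly_monic
        (fun h1 => by rw [h1, Polynomial.natDegree_one] at hcard; omega)
      rwa [hcard] at hlt
    rw [A.pow_eq_aeval_mod_charpoly k, Polynomial.aeval_eq_sum_range' hdeg, Matrix.mul_sum,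
      Matrix.sum_mulVec]
    refine Finset.sum_eq_zero fun i hi => ?_
    rw [Matrix.mul_smul, Matrix.smul_mulVec, hlow i (Finset.mem_range.1 hi), smul_zero]
  rw [Matrix.rank, LinearMap.finrank_range_of_inj hinj, Module.finrank_fin_fun]

/-- Every pair `(A, C)` factors through an observable pair, namely the one induced on the quotient
by the unobservable subspace. -/
theorem exists_observable_quotient {p q : ℕ} (A : Matrix (Fin p) (Fin p) ℝ)
    (C : Matrix (Fin q) (Fin p) ℝ) :
    ∃ (d : ℕ) (P : Matrix (Fin d) (Fin p) ℝ) (A' : Matrix (Fin d) (Fin d) ℝ)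
      (C' : Matrix (Fin q) (Fin d) ℝ),
      P * A = A' * P ∧ C' * P = C ∧ Function.Surjective P.mulVec ∧ Observable A' C' := by
  let N : Submodule ℝ (Fin p → ℝ) := ⨅ k : ℕ, LinearMap.ker (C * A ^ k).mulVecLin
  have hN : ∀ v, v ∈ N ↔ ∀ k : ℕ, (C * A ^ k) *ᵥ v = 0 := fun v => by
    simp [N, Submodule.mem_iInf]
  have hA : N ≤ N.comap A.mulVecLin := fun v hv => by
    rw [Submodule.mem_comap, hN]
    intro k
    rw [mulVecLin_apply, mulVec_mulVec, Matrix.mul_assoc, ← pow_succ]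
    exact (hN v).1 hv (k + 1)
  have hC : N ≤ LinearMap.ker C.mulVecLin := fun v hv => by
    simpa using (hN v).1 hv 0
  let e := (Module.finBasis ℝ ((Fin p → ℝ) ⧸ N)).equivFun
  let P := LinearMap.toMatrix' (e.toLinearMap ∘ₗ N.mkQ)
  let A' := LinearMap.toMatrix' (e.toLinearMap ∘ₗ N.mapQ N A.mulVecLin hA ∘ₗ e.symm.toLinearMap)
  let C' := LinearMap.toMatrix' (N.liftQ C.mulVecLin hC ∘ₗ e.symm.toLinearMap)
  have hP : ∀ v, P *ᵥ v = e (N.mkQ v) := fun v => LinearMap.toMatrix'_mulVec _ v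
  have hPA : P * A = A' * P := by
    refine Matrix.ext_iff_mulVec.2 fun v => ?_
    rw [← mulVec_mulVec, ← mulVec_mulVec, hP, hP, LinearMap.toMatrix'_mulVec]
    simp
  have hCP : C' * P = C := by
    refine Matrix.ext_iff_mulVec.2 fun v => ?_
    rw [← mulVec_mulVec, hP, LinearMap.toMatrix'_mulVec]
    simp
  have hsurj : Function.Surjective P.mulVec := fun w => by
    obtain ⟨v, hv⟩ := N.mkQ_surjective (e.symm w)
    exact ⟨v, by rw [hP, hv, e.apply_symm_apply]⟩
  have hpow : ∀ k : ℕ, P * A ^ k = A' ^ k * P := fun k => by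
    induction k with
    | zero => simp
    | succ k ih => rw [pow_succ, ← Matrix.mul_assoc, ih, Matrix.mul_assoc, hPA, pow_succ,
        Matrix.mul_assoc]
  refine ⟨_, P, A', C', hPA, hCP, hsurj, observable_of_forall_pow fun w hw => ?_⟩
  obtain ⟨v, rfl⟩ := hsurj w
  have hv : v ∈ N := (hN v).2 fun k => by
    rw [← hCP, Matrix.mul_assoc, hpow, ← Matrix.mul_assoc, ← mulVec_mulVec]
    exact hw k
  rw [hP, Submodule.mkQ_apply, (Submodule.Quotient.mk_eq_zero N).2 hv, map_zero]

/-- Linear independence of the coordinates of a vector-valued function is preserved by a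
surjective matrix. -/
theorem LinearIndependent.mulVec_of_surjective {α : Type*} {p d : ℕ} {Φ : α → Fin p → ℝ}
    (hΦ : LinearIndependent ℝ fun i x => Φ x i) {P : Matrix (Fin d) (Fin p) ℝ}
    (hP : Function.Surjective P.mulVec) : LinearIndependent ℝ fun i x => (P *ᵥ Φ x) i := by
  rw [Fintype.linearIndependent_iff] at hΦ ⊢
  intro g hg
  have hvec : g ᵥ* P = 0 := by
    refine funext (hΦ _ (funext fun x => ?_))
    have hx : g ⬝ᵥ P *ᵥ Φ x = 0 := by simpa [dotProduct] using congrFun hg x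
    rw [dotProduct_mulVec] at hx
    simpa [dotProduct] using hx
  have hzero : g = 0 := dotProduct_eq_zero g fun w => by
    obtain ⟨v, rfl⟩ := hP w
    rw [dotProduct_mulVec, hvec, zero_dotProduct]
  exact congrFun hzero

/-- **Observable Koopman linear embedding.**  If a system admits a Koopman linear embedding
whose matrix pair `(A_K, C_K)` is not observable, then it also admits a Koopman linear
embedding (with some other lifting function) whose matrix pair is observable. -/
theorem observable_koopman_linear_embedding
    {n m nz : ℕ} (f : (Fin n → ℝ) → (Fin m → ℝ) → (Fin n → ℝ))
    (X : Set (Fin n → ℝ)) (U : Set (Fin m → ℝ))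
    (Ψ : (Fin n → ℝ) → Fin nz → ℝ)
    (AK : Matrix (Fin nz) (Fin nz) ℝ) (BK : Matrix (Fin nz) (Fin m) ℝ)
    (CK : Matrix (Fin n) (Fin nz) ℝ)
    (hemb : IsKoopmanLinearEmbedding f X U Ψ AK BK CK)
    (hnotobs : ¬ Observable AK CK) :
    ∃ (nzb : ℕ) (Ψb : (Fin n → ℝ) → Fin nzb → ℝ)
      (Ab : Matrix (Fin nzb) (Fin nzb) ℝ) (Bb : Matrix (Fin nzb) (Fin m) ℝ)
      (Cb : Matrix (Fin n) (Fin nzb) ℝ),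
      IsKoopmanLinearEmbedding f X U Ψb Ab Bb Cb ∧ Observable Ab Cb := by
  obtain ⟨hind, hdyn, hout⟩ := hemb
  obtain ⟨d, P, A', C', hPA, hCP, hsurj, hobs⟩ := exists_observable_quotient AK CK
  refine ⟨d, fun x => P *ᵥ Ψ x, A', P * BK, C',
    ⟨hind.mulVec_of_surjective hsurj, fun x hx u hu => ?_, fun x hx => ?_⟩, hobs⟩
  · simp only [hdyn x hx u hu, mulVec_add, mulVec_mulVec, hPA]
  · rw [mulVec_mulVec, hCP]
    exact hout x hx
end
end

section
/- (Equivalence of Koopman linear embedding and the CAP structure with Koopman closure.) Consider a discrete-time controlled system x⁺ = f(x,u) with 𝒳 ⊆ ℝ^n open and convex, 𝒰 ⊆ ℝ^m open, and f : 𝒳 × 𝒰 → 𝒳 surjective. Then the following are equivalent: (1) there exist a lifting function Ψ : 𝒳 → ℝ^{n_z} and constant matrices A_K ∈ ℝ^{n_z×n_z}, B_K ∈ ℝ^{n_z×m}, C_K ∈ ℝ^{n×n_z} such that Ψ(f(x,u)) = A_K Ψ(x) + B_K u and x = C_K Ψ(x) for all x ∈ 𝒳, u ∈ 𝒰; (2)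 there exist an invertible matrix T ∈ ℝ^{n×n}, a partition n = n₁ + n₂, functions g, h and matrices C ∈ ℝ^{n₁×n₁}, D ∈ ℝ^{n₁×m} such that, writing col(x₁, x₂) := Tx with x₁ ∈ ℝ^{n₁}, x₂ ∈ ℝ^{n₂}, one has T f(x,u) = col( g(x₂) + Cx₁ + Du , h(x₂) ) for all x ∈ 𝒳, u ∈ 𝒰, AND there exist a lifting function Ψ̄ : proj_{x₂}(T𝒳) → ℝ^{n̄_z} and constant matrices Ā_K ∈ ℝ^{n̄_z×n̄_z}, C̄_K ∈ ℝ^{(n₂+n₁)×n̄_z} such that Ψ̄(h(x₂)) = Ā_K Ψ̄(x₂) and col(x₂, g(x₂)) = C̄_K Ψ̄(x₂) for all x₂ ∈ proj_{x₂}(T𝒳). -/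
open Matrix Topology Filter

noncomputable section

namespace KoopmanEmbedding

variable {E Z V : Type*} [NormedAddCommGroup E] [NormedSpace ℝ E] [AddCommGroup Z] [Module ℝ Z]
  [NormedAddCommGroup V] [NormedSpace ℝ V]

theorem eventually_add_smul_mem {X : Set E} (hX : IsOpen X) {y : E} (hy : y ∈ X) (v : E) :
    ∀ᶠ t in 𝓝 (0 : ℝ), y + t • v ∈ X := by
  have hc : Continuous fun t : ℝ => y + t • v := by fun_prop
  exact hc.continuousAt.eventually_mem (hX.mem_nhds (by simpa using hy))

/-- A function on a convex set which is locally affine along a fixed direction is affine along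
that direction. -/
theorem eq_add_smul_of_eventually {X : Set E} (hX : Convex ℝ X) {Ψ : E → Z} {v : E} {w : Z}
    (hloc : ∀ y ∈ X, ∀ᶠ t in 𝓝 (0 : ℝ), Ψ (y + t • v) = Ψ y + t • w)
    {y : E} (hy : y ∈ X) {t : ℝ} (ht : y + t • v ∈ X) : Ψ (y + t • v) = Ψ y + t • w := by
  have hconv : Convex ℝ {s : ℝ | y + s • v ∈ X} := by
    intro a ha b hb p q hp hq hpq
    have key := hX ha hb hp hq hpq
    have e : p • (y + a • v) + q • (y + b • v) = y + (p • a + q • b) • v := by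
      have : p • y + q • y = y := by rw [← add_smul, hpq, one_smul]
      rw [smul_add, smul_add, add_smul, smul_assoc, smul_assoc]
      nth_rewrite 3 [← this]
      abel
    rwa [e] at key
  have key := hconv.isPreconnected.induction₂
    (fun a b => Ψ (y + b • v) = Ψ (y + a • v) + (b - a) • w)
    (fun a ha => by
      have hc : Tendsto (fun b : ℝ => b - a) (𝓝 a) (𝓝 0) := by
        have : Continuous fun b : ℝ => b - a := by fun_prop
        simpa using this.tendsto a
      filter_upwards [nhdsWithin_le_nhds (hc.eventually (hloc _ ha))] with b hb
      rw [← hb, add_assoc, ← add_smul, add_sub_cancel])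
    (fun a b c _ _ _ hab hbc => by
      rw [hbc, hab, add_assoc, ← add_smul]; congr 2; ring)
    (fun a b _ _ hab => by
      rw [hab, add_assoc, ← add_smul]; simp)
    (show (0 : ℝ) ∈ {s : ℝ | y + s • v ∈ X} by simpa using hy) ht
  simpa using key

/-- The lifted directions `w` along whose image `C w` the lifting `Ψ` is affine with slope `w`. -/
def affineDirections {X : Set E} (hXo : IsOpen X) (hX : Convex ℝ X) (Ψ : E → Z) (C : Z →ₗ[ℝ] E) :
    Submodule ℝ Z where
  carrier := {w | ∀ y ∈ X, ∀ t : ℝ, y + t • C w ∈ X → Ψ (y + t • C w) = Ψ y + t • w}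
  zero_mem' := by simp
  smul_mem' c w hw y hy t ht := by
    simp only [map_smul, ← mul_smul] at ht ⊢
    exact hw y hy _ ht
  add_mem' {a b} ha hb y hy t ht := by
    refine eq_add_smul_of_eventually hX (fun y hy => ?_) hy ht
    filter_upwards [eventually_add_smul_mem hXo hy (C a),
      eventually_add_smul_mem hXo hy (C (a + b))] with t h₁ h₂
    have e : y + t • C (a + b) = y + t • C a + t • C b := by rw [map_add, smul_add, add_assoc]
    rw [e] at h₂ ⊢
    rw [hb _ h₁ t h₂, ha y hy t h₁, smul_add, add_assoc]

section

variable {X : Set E} (hXo : IsOpen X) (hX : Convex ℝ X) {Ψ : E → Z} {C : Z →ₗ[ℝ] E}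

theorem mem_affineDirections_of_eventually {w : Z}
    (hw : ∀ y ∈ X, ∀ᶠ t in 𝓝 (0 : ℝ), Ψ (y + t • C w) = Ψ y + t • w) :
    w ∈ affineDirections hXo hX Ψ C :=
  fun _ hy _ ht => eq_add_smul_of_eventually hX hw hy ht

theorem apply_add_of_mem_affineDirections {w : Z} (hw : w ∈ affineDirections hXo hX Ψ C) {y : E}
    (hy : y ∈ X) (h : y + C w ∈ X) : Ψ (y + C w) = Ψ y + w := by
  simpa using hw y hy 1 (by simpa using h)

theorem eq_zero_of_mem_affineDirections (hne : X.Nonempty) {w : Z}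
    (hw : w ∈ affineDirections hXo hX Ψ C) (h : C w = 0) : w = 0 := by
  obtain ⟨y, hy⟩ := hne
  simpa [h, hy] using apply_add_of_mem_affineDirections hXo hX hw hy

variable {U : Set V} {f : E → V → E} {A : Z →ₗ[ℝ] Z} {B : V →ₗ[ℝ] Z}

theorem input_mem_affineDirections
    (hf : ∀ x ∈ X, ∀ u ∈ U, f x u ∈ X)
    (hsurj : ∀ y ∈ X, ∃ x ∈ X, ∃ u ∈ U, f x u = y)
    (hΨ : ∀ x ∈ X, ∀ u ∈ U, Ψ (f x u) = A (Ψ x) + B u)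
    (hC : ∀ x ∈ X, C (Ψ x) = x)
    (hU : IsOpen U) (v : V) :
    B v ∈ affineDirections hXo hX Ψ C := by
  refine mem_affineDirections_of_eventually hXo hX fun y hy => ?_
  obtain ⟨x, hx, u, hu, rfl⟩ := hsurj y hy
  filter_upwards [eventually_add_smul_mem hU hu v] with t ht
  have e : Ψ (f x (u + t • v)) = Ψ (f x u) + t • B v := by
    rw [hΨ x hx _ ht, hΨ x hx u hu, map_add, map_smul, add_assoc]
  have e' : f x (u + t • v) = f x u + t • C (B v) := by
    rw [← hC _ (hf x hx _ ht), e, map_add, hC _ (hf x hx u hu), map_smul]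
  rw [← e', e]

theorem map_mem_affineDirections
    (hf : ∀ x ∈ X, ∀ u ∈ U, f x u ∈ X)
    (hsurj : ∀ y ∈ X, ∃ x ∈ X, ∃ u ∈ U, f x u = y)
    (hΨ : ∀ x ∈ X, ∀ u ∈ U, Ψ (f x u) = A (Ψ x) + B u)
    (hC : ∀ x ∈ X, C (Ψ x) = x)
    {w : Z} (hw : w ∈ affineDirections hXo hX Ψ C) :
    A w ∈ affineDirections hXo hX Ψ C := by
  refine mem_affineDirections_of_eventually hXo hX fun y hy => ?_
  obtain ⟨x, hx, u, hu, rfl⟩ := hsurj y hy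
  filter_upwards [eventually_add_smul_mem hXo hx (C w)] with t ht
  have e : Ψ (f (x + t • C w) u) = Ψ (f x u) + t • A w := by
    rw [hΨ _ ht u hu, hΨ x hx u hu, hw x hx t ht, map_add, map_smul, add_right_comm]
  have e' : f (x + t • C w) u = f x u + t • C (A w) := by
    rw [← hC _ (hf _ ht u hu), e, map_add, hC _ (hf x hx u hu), map_smul]
  rw [← e', e]

end

/-- An injective linear map out of `ℝ^k` extends to coordinates on the target. -/
theorem exists_linearEquiv_extending [FiniteDimensional ℝ E] {k : ℕ} (J : (Fin k → ℝ) →ₗ[ℝ] E)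
    (hJ : Function.Injective J) :
    ∃ (l : ℕ) (e : E ≃ₗ[ℝ] (Fin k ⊕ Fin l → ℝ)), ∀ a, e (J a) = Sum.elim a 0 := by
  obtain ⟨Q, hQ⟩ := (LinearMap.range J).exists_isCompl
  let e : (Fin k ⊕ Fin (Module.finrank ℝ Q) → ℝ) ≃ₗ[ℝ] E :=
    (LinearEquiv.sumArrowLequivProdArrow _ _ ℝ ℝ).trans
      (((LinearEquiv.ofInjective J hJ).prodCongr (Module.finBasis ℝ Q).equivFun.symm).trans
        (Submodule.prodEquivOfIsCompl _ _ hQ))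
  refine ⟨_, e.symm, fun a => ?_⟩
  rw [LinearEquiv.symm_apply_eq]
  simp [e, LinearEquiv.sumArrowLequivProdArrow, Equiv.sumArrowEquivProdArrow, Function.comp_def]

/-- A linear lifted model splits, in suitable coordinates `(x₁, x₂)`, into an affine part driven by
an autonomous part, with the autonomous part admitting a linear lifting. -/
theorem exists_splitting {n m nz : ℕ} {f : (Fin n → ℝ) → (Fin m → ℝ) → (Fin n → ℝ)}
    {X : Set (Fin n → ℝ)} {U : Set (Fin m → ℝ)}
    (hXo : IsOpen X) (hX : Convex ℝ X) (hU : IsOpen U) (hne : X.Nonempty)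
    (hf : ∀ x ∈ X, ∀ u ∈ U, f x u ∈ X)
    (hsurj : ∀ y ∈ X, ∃ x ∈ X, ∃ u ∈ U, f x u = y)
    {Ψ : (Fin n → ℝ) → Fin nz → ℝ} {A : (Fin nz → ℝ) →ₗ[ℝ] (Fin nz → ℝ)}
    {B : (Fin m → ℝ) →ₗ[ℝ] (Fin nz → ℝ)} {C : (Fin nz → ℝ) →ₗ[ℝ] (Fin n → ℝ)}
    (hΨ : ∀ x ∈ X, ∀ u ∈ U, Ψ (f x u) = A (Ψ x) + B u)
    (hC : ∀ x ∈ X, C (Ψ x) = x) :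
    ∃ (k l : ℕ) (e : (Fin n → ℝ) ≃ₗ[ℝ] (Fin k ⊕ Fin l → ℝ))
      (M : (Fin k → ℝ) →ₗ[ℝ] (Fin nz → ℝ)) (N : (Fin k → ℝ) →ₗ[ℝ] (Fin k → ℝ))
      (D : (Fin m → ℝ) →ₗ[ℝ] (Fin k → ℝ)) (φ : (Fin l → ℝ) → Fin nz → ℝ),
      (∀ a, e (C (M a)) = Sum.elim a 0) ∧ (∀ a, A (M a) = M (N a)) ∧ (∀ u, B u = M (D u)) ∧
      ∀ x ∈ X, Ψ x = φ (fun i => e x (Sum.inr i)) + M (fun i => e x (Sum.inl i)) := by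
  classical
  let W := affineDirections hXo hX Ψ C
  let b := (Module.finBasis ℝ W).equivFun
  let M : (Fin (Module.finrank ℝ W) → ℝ) →ₗ[ℝ] (Fin nz → ℝ) := W.subtype ∘ₗ b.symm.toLinearMap
  have hM : ∀ a, M a ∈ W := fun a => (b.symm a).2
  have hMb : ∀ w : W, M (b w) = w := fun w => by simp [M]
  have hinj : Function.Injective (C ∘ₗ M) := by
    rw [← LinearMap.ker_eq_bot, LinearMap.ker_eq_bot']
    intro a ha
    have h0 : M a = 0 := eq_zero_of_mem_affineDirections hXo hX hne (hM a) ha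
    have h1 : b.symm a = 0 := Subtype.ext h0
    simpa using h1
  obtain ⟨l, e, he⟩ := exists_linearEquiv_extending (C ∘ₗ M) hinj
  have hAM : ∀ a, (A ∘ₗ M) a ∈ W := fun a =>
    map_mem_affineDirections hXo hX hf hsurj hΨ hC (hM a)
  have hB : ∀ u, B u ∈ W := input_mem_affineDirections hXo hX hf hsurj hΨ hC hU
  let φ : (Fin l → ℝ) → Fin nz → ℝ := fun z =>
    if h : ∃ x ∈ X, (fun i => e x (Sum.inr i)) = z then
      Ψ h.choose - M (fun i => e h.choose (Sum.inl i)) else 0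
  refine ⟨_, l, e, M, b.toLinearMap ∘ₗ (A ∘ₗ M).codRestrict W hAM,
    b.toLinearMap ∘ₗ B.codRestrict W hB, φ, he, fun a => (hMb ⟨_, hAM a⟩).symm,
    fun u => (hMb ⟨_, hB u⟩).symm, fun x hx => ?_⟩
  have h : ∃ x' ∈ X, (fun i => e x' (Sum.inr i)) = fun i => e x (Sum.inr i) := ⟨x, hx, rfl⟩
  have hφ : φ (fun i => e x (Sum.inr i)) = Ψ h.choose - M (fun i => e h.choose (Sum.inl i)) :=
    dif_pos h
  obtain ⟨hy, hyx⟩ := h.choose_spec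
  generalize h.choose = y at hφ hy hyx
  have hxy : x = y + C (M ((fun i => e x (Sum.inl i)) - fun i => e y (Sum.inl i))) := by
    apply e.injective
    rw [map_add, ← LinearMap.comp_apply, he]
    ext (i | i)
    · simp
    · simpa using (congrFun hyx i).symm
  have key := apply_add_of_mem_affineDirections hXo hX (hM _) hy (hxy ▸ hx)
  rw [← hxy, map_sub] at key
  rw [hφ, key]
  abel

end KoopmanEmbedding

/-- **Equivalence of Koopman linear embedding and the CAP structure with Koopman closure.**
For a system `x⁺ = f(x,u)` with `𝒳 ⊆ ℝ^n` open and convex, `𝒰` open and `f : 𝒳 × 𝒰 → 𝒳`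
surjective, the following are equivalent:
(1) there exist a lifting `Ψ : 𝒳 → ℝ^{n_z}` and matrices `A_K, B_K, C_K` with
    `Ψ(f(x,u)) = A_K Ψ(x) + B_K u` and `x = C_K Ψ(x)` on `𝒳 × 𝒰`;
(2) up to an invertible change of coordinates `T` the system has the CAP form
    `x₁⁺ = g(x₂) + Cx₁ + Du`, `x₂⁺ = h(x₂)`, and there exist a lifting `Ψ̄` on
    `proj_{x₂}(T𝒳)` and matrices `Ā_K, C̄_K` with `Ψ̄(h(x₂)) = Ā_K Ψ̄(x₂)` and
    `col(x₂, g(x₂)) = C̄_K Ψ̄(x₂)`. -/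
theorem koopman_linear_embedding_iff_CAP_with_koopman_closure
    {n m : ℕ} (f : (Fin n → ℝ) → (Fin m → ℝ) → (Fin n → ℝ))
    (X : Set (Fin n → ℝ)) (U : Set (Fin m → ℝ))
    (hXopen : IsOpen X) (hXconv : Convex ℝ X) (hUopen : IsOpen U)
    (hf : ∀ x ∈ X, ∀ u ∈ U, f x u ∈ X)
    (hsurj : ∀ y ∈ X, ∃ x ∈ X, ∃ u ∈ U, f x u = y) :
    (∃ (nz : ℕ) (Ψ : (Fin n → ℝ) → Fin nz → ℝ)
       (AK : Matrix (Fin nz) (Fin nz) ℝ) (BK : Matrix (Fin nz) (Fin m) ℝ)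
       (CK : Matrix (Fin n) (Fin nz) ℝ),
       (∀ x ∈ X, ∀ u ∈ U, Ψ (f x u) = AK.mulVec (Ψ x) + BK.mulVec u) ∧
       (∀ x ∈ X, x = CK.mulVec (Ψ x)))
    ↔
    (∃ (n₁ n₂ : ℕ) (T : Matrix (Fin n₁ ⊕ Fin n₂) (Fin n) ℝ)
       (S : Matrix (Fin n) (Fin n₁ ⊕ Fin n₂) ℝ),
       T * S = 1 ∧ S * T = 1 ∧
       ∃ (g : (Fin n₂ → ℝ) → Fin n₁ → ℝ) (h : (Fin n₂ → ℝ) → Fin n₂ → ℝ)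
         (Cm : Matrix (Fin n₁) (Fin n₁) ℝ) (D : Matrix (Fin n₁) (Fin m) ℝ),
         (∀ x ∈ X, ∀ u ∈ U,
           T.mulVec (f x u) =
             Sum.elim
               (g (fun i => T.mulVec x (Sum.inr i)) +
                 Cm.mulVec (fun i => T.mulVec x (Sum.inl i)) + D.mulVec u)
               (h (fun i => T.mulVec x (Sum.inr i)))) ∧
         ∃ (nzb : ℕ) (Ψb : (Fin n₂ → ℝ) → Fin nzb → ℝ)
           (Ab : Matrix (Fin nzb) (Fin nzb) ℝ)
           (Cb : Matrix (Fin n₂ ⊕ Fin n₁) (Fin nzb) ℝ),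
           ∀ x ∈ X,
             Ψb (h (fun i => T.mulVec x (Sum.inr i))) =
               Ab.mulVec (Ψb (fun i => T.mulVec x (Sum.inr i))) ∧
             Sum.elim (fun i => T.mulVec x (Sum.inr i))
                 (g (fun i => T.mulVec x (Sum.inr i)))
               = Cb.mulVec (Ψb (fun i => T.mulVec x (Sum.inr i)))) := by
  constructor
  · rintro ⟨nz, Ψ, AK, BK, CK, hΨ, hC⟩
    rcases X.eq_empty_or_nonempty with rfl | hne
    · refine ⟨n, 0, (1 : Matrix _ _ ℝ).submatrix id (Sum.inl : Fin n → Fin n ⊕ Fin 0),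
        (1 : Matrix _ _ ℝ).submatrix (Sum.inl : Fin n → Fin n ⊕ Fin 0) id, ?_, ?_, 0, 0, 0, 0,
        by simp, 0, 0, 0, 0, by simp⟩
      · exact ((1 : Matrix _ _ ℝ).submatrix_mul_equiv 1 id (Equiv.sumEmpty _ _).symm id).trans
          (by simp)
      · rw [← submatrix_mul _ _ _ _ _ Function.bijective_id, Matrix.one_mul]
        exact submatrix_one _ Sum.inl_injective
    obtain ⟨k, l, e, M, N, D, φ, hCM, hAM, hB, hφ⟩ :=
      KoopmanEmbedding.exists_splitting (A := AK.mulVecLin) (B := BK.mulVecLin)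
        (C := CK.mulVecLin) hXopen hXconv hUopen hne hf hsurj hΨ (fun x hx => (hC x hx).symm)
    have hU : U.Nonempty := by
      obtain ⟨y, hy⟩ := hne
      obtain ⟨-, -, u, hu, -⟩ := hsurj y hy
      exact ⟨u, hu⟩
    have hT : ∀ x, (LinearMap.toMatrix' e.toLinearMap).mulVec x = e x := fun x => by
      rw [LinearMap.toMatrix'_mulVec]; rfl
    let F : (Fin nz → ℝ) →ₗ[ℝ] (Fin k ⊕ Fin l → ℝ) :=
      e.toLinearMap ∘ₗ CK.mulVecLin ∘ₗ AK.mulVecLin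
    have hdyn : ∀ x ∈ X, ∀ u ∈ U, e (f x u) =
        Sum.elim
          ((fun i => F (φ (fun i => e x (Sum.inr i))) (Sum.inl i)) +
            N (fun i => e x (Sum.inl i)) + D u)
          (fun i => F (φ (fun i => e x (Sum.inr i))) (Sum.inr i)) := by
      intro x hx u hu
      have h₁ : Ψ (f x u) = AK.mulVecLin (φ (fun i => e x (Sum.inr i))) +
          M (N (fun i => e x (Sum.inl i)) + D u) := by
        have h := hΨ x hx u hu
        rw [hφ x hx, ← mulVecLin_apply, ← mulVecLin_apply, map_add, hAM, hB] at h
        rw [h, map_add, add_assoc]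
      rw [hC _ (hf x hx u hu), h₁, ← mulVecLin_apply, map_add, map_add, hCM]
      ext (i | i) <;> simp [F, add_assoc]
    refine ⟨k, l, LinearMap.toMatrix' e.toLinearMap, LinearMap.toMatrix' e.symm.toLinearMap,
      ?_, ?_, fun z i => F (φ z) (Sum.inl i), fun z i => F (φ z) (Sum.inr i),
      LinearMap.toMatrix' N, LinearMap.toMatrix' D, ?_, nz, φ,
      LinearMap.toMatrix' (AK.mulVecLin - M ∘ₗ LinearMap.funLeft ℝ ℝ Sum.inl ∘ₗ F),
      LinearMap.toMatrix'
        ((LinearEquiv.sumArrowLequivProdArrow _ _ ℝ ℝ).symm.toLinearMap ∘ₗ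
          (LinearMap.funLeft ℝ ℝ Sum.inr ∘ₗ e.toLinearMap ∘ₗ CK.mulVecLin).prod
            (LinearMap.funLeft ℝ ℝ Sum.inl ∘ₗ F)), ?_⟩
    · rw [← LinearMap.toMatrix'_comp]; simp
    · rw [← LinearMap.toMatrix'_comp]; simp
    · intro x hx u hu
      simp only [hT, LinearMap.toMatrix'_mulVec]
      exact hdyn x hx u hu
    · intro x hx
      simp only [hT, LinearMap.toMatrix'_mulVec]
      constructor
      · obtain ⟨u, hu⟩ := hU
        have h₁ := hφ _ (hf x hx u hu)
        rw [hΨ x hx u hu, hφ x hx, hdyn x hx u hu, ← mulVecLin_apply, ← mulVecLin_apply,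
          map_add, hAM, hB] at h₁
        simp only [Sum.elim_inl, Sum.elim_inr] at h₁
        rw [map_add, map_add] at h₁
        rw [LinearMap.sub_apply, eq_sub_iff_add_eq]
        refine add_right_cancel (b := M (N fun i => e x (Sum.inl i)) + M (D u)) ?_
        rw [← add_assoc (AK.mulVecLin _), h₁]
        simp only [add_assoc]
        rfl
      · have h₁ := congrArg e (hC x hx)
        rw [hφ x hx, ← mulVecLin_apply, map_add, map_add, hCM] at h₁
        ext (i | i)
        · have h₂ := congrFun h₁ (Sum.inr i)
          simp only [Pi.add_apply, Sum.elim_inr, Pi.zero_apply, add_zero] at h₂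
          exact h₂
        · rfl
  · rintro ⟨n₁, n₂, T, S, -, hST, g, h, Cm, D, hdyn, nzb, Ψb, Ab, Cb, hb⟩
    let ε : Fin (n₁ + nzb) ≃ Fin n₁ ⊕ Fin nzb := finSumFinEquiv.symm
    let Ψ : (Fin n → ℝ) → Fin n₁ ⊕ Fin nzb → ℝ := fun x =>
      Sum.elim (fun i => T.mulVec x (Sum.inl i)) (Ψb fun i => T.mulVec x (Sum.inr i))
    let G : Matrix (Fin n₁ ⊕ Fin n₂) (Fin n₁ ⊕ Fin nzb) ℝ :=
      fromBlocks 1 0 0 (Cb.submatrix Sum.inl id)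
    refine ⟨n₁ + nzb, fun x => Ψ x ∘ ε,
      (fromBlocks Cm (Cb.submatrix Sum.inr id) 0 Ab).submatrix ε ε,
      (fromRows D 0).submatrix ε id,
      (S * G).submatrix id ε, ?_, ?_⟩
    · intro x hx u hu
      have hg : g (fun i => T.mulVec x (Sum.inr i)) =
          Cb.submatrix Sum.inr id *ᵥ Ψb (fun i => T.mulVec x (Sum.inr i)) := by
        ext i
        exact congrFun (hb x hx).2 (Sum.inr i)
      have hΨ : Ψ (f x u) =
          fromBlocks Cm (Cb.submatrix Sum.inr id) 0 Ab *ᵥ Ψ x + fromRows D 0 *ᵥ u := by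
        simp only [Ψ, hdyn x hx u hu, Sum.elim_inl, Sum.elim_inr, (hb x hx).1, hg,
          fromBlocks_mulVec, fromRows_mulVec]
        ext (i | i) <;> simp [Function.comp_def]
        ring
      rw [submatrix_mulVec_equiv, Function.comp_assoc, Equiv.self_comp_symm, Function.comp_id]
      exact congrArg (· ∘ ε) hΨ
    · intro x hx
      have hx₂ : (fun i => T.mulVec x (Sum.inr i)) =
          Cb.submatrix Sum.inl id *ᵥ Ψb (fun i => T.mulVec x (Sum.inr i)) := by
        ext i
        exact congrFun (hb x hx).2 (Sum.inl i)
      have hTx : T *ᵥ x = G *ᵥ Ψ x := by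
        simp only [G, fromBlocks_mulVec]
        ext (i | i)
        · simp [Ψ, Function.comp_def]
        · simpa [Ψ, Function.comp_def] using congrFun hx₂ i
      rw [submatrix_mulVec_equiv, Function.comp_assoc, Equiv.self_comp_symm, Function.comp_id,
        Function.comp_id, ← mulVec_mulVec, ← hTx, mulVec_mulVec, hST, one_mulVec]
end
end

section
/- (Explicit Koopman linear embedding from a CAP structure with Koopman-closed generator.) Consider a discrete-time controlled system x⁺ = f(x,u). Suppose there exist an invertible matrix T ∈ ℝ^{n×n}, a partition n = n₁ + n₂, functions g, h and matrices C ∈ ℝ^{n₁×n₁}, D ∈ ℝ^{n₁×m} such that, writing col(x₁, x₂) := Tx with x₁ ∈ ℝ^{n₁}, x₂ ∈ ℝ^{n₂}, one has T f(x,u) = col( g(x₂) + Cx₁ + Du , h(x₂) ) for all x ∈ 𝒳, u ∈ 𝒰. Suppose further there exist Ψ̄ : proj_{x₂}(T𝒳) → ℝ^{n̄_z} and matrices Ā_K ∈ ℝ^{n̄_z×n̄_z}, C̄_K¹ ∈ ℝ^{n₂×n̄_z}, C̄_K² ∈ ℝ^{n₁×n̄_z} such that Ψ̄(h(x₂)) =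 Ā_K Ψ̄(x₂), x₂ = C̄_K¹ Ψ̄(x₂), and g(x₂) = C̄_K² Ψ̄(x₂) for all x₂ ∈ proj_{x₂}(T𝒳). Then the lifting Ψ(x) := col( x₁, Ψ̄(x₂) ) (where col(x₁,x₂) = Tx) and the matrices A_K := [[C, C̄_K²],[0, Ā_K]], B_K := col(D, 0), C_K := T^{−1}·[[I_{n₁}, 0],[0, C̄_K¹]] satisfy Ψ(f(x,u)) = A_K Ψ(x) + B_K u and x = C_K Ψ(x) for all x ∈ 𝒳, u ∈ 𝒰. -/
open Matrix

noncomputable section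

/-- **Explicit Koopman linear embedding from a CAP structure with Koopman-closed
generator.**  Suppose the system `x⁺ = f(x,u)` has, in the coordinates `col(x₁,x₂) = Tx`
(`T` invertible with inverse `S`), the CAP form `x₁⁺ = g(x₂) + Cx₁ + Du`, `x₂⁺ = h(x₂)`,
and suppose `Ψ̄` satisfies `Ψ̄(h(x₂)) = Ā_K Ψ̄(x₂)`, `x₂ = C̄_K¹ Ψ̄(x₂)` and
`g(x₂) = C̄_K² Ψ̄(x₂)` on `proj_{x₂}(T𝒳)`.  Then the lifting `Ψ(x) = col(x₁, Ψ̄(x₂))`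
together with `A_K = [[C, C̄_K²],[0, Ā_K]]`, `B_K = col(D, 0)` and
`C_K = T⁻¹ [[I,0],[0,C̄_K¹]]` satisfies `Ψ(f(x,u)) = A_K Ψ(x) + B_K u` and
`x = C_K Ψ(x)` on `𝒳 × 𝒰`. -/
theorem koopman_embedding_from_CAP_with_closure
    {n m n₁ n₂ nzb : ℕ} (f : (Fin n → ℝ) → (Fin m → ℝ) → (Fin n → ℝ))
    (X : Set (Fin n → ℝ)) (U : Set (Fin m → ℝ))
    (T : Matrix (Fin n₁ ⊕ Fin n₂) (Fin n) ℝ) (S : Matrix (Fin n) (Fin n₁ ⊕ Fin n₂) ℝ)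
    (hTS : T * S = 1) (hST : S * T = 1)
    (g : (Fin n₂ → ℝ) → Fin n₁ → ℝ) (h : (Fin n₂ → ℝ) → Fin n₂ → ℝ)
    (C : Matrix (Fin n₁) (Fin n₁) ℝ) (D : Matrix (Fin n₁) (Fin m) ℝ)
    (hCAP : ∀ x ∈ X, ∀ u ∈ U,
      T.mulVec (f x u) =
        Sum.elim
          (g (fun i => T.mulVec x (Sum.inr i)) +
            C.mulVec (fun i => T.mulVec x (Sum.inl i)) + D.mulVec u)
          (h (fun i => T.mulVec x (Sum.inr i))))
    (Ψb : (Fin n₂ → ℝ) → Fin nzb → ℝ)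
    (Ab : Matrix (Fin nzb) (Fin nzb) ℝ)
    (Cb₁ : Matrix (Fin n₂) (Fin nzb) ℝ) (Cb₂ : Matrix (Fin n₁) (Fin nzb) ℝ)
    (hclosure : ∀ x ∈ X,
      Ψb (h (fun i => T.mulVec x (Sum.inr i))) =
        Ab.mulVec (Ψb (fun i => T.mulVec x (Sum.inr i))) ∧
      (fun i => T.mulVec x (Sum.inr i)) =
        Cb₁.mulVec (Ψb (fun i => T.mulVec x (Sum.inr i))) ∧
      g (fun i => T.mulVec x (Sum.inr i)) =
        Cb₂.mulVec (Ψb (fun i => T.mulVec x (Sum.inr i)))) :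
    (∀ x ∈ X, ∀ u ∈ U,
      Sum.elim (fun i => T.mulVec (f x u) (Sum.inl i))
          (Ψb (fun i => T.mulVec (f x u) (Sum.inr i)))
        = (Matrix.fromBlocks C Cb₂ 0 Ab).mulVec
            (Sum.elim (fun i => T.mulVec x (Sum.inl i))
              (Ψb (fun i => T.mulVec x (Sum.inr i))))
          + (Matrix.fromRows D 0).mulVec u) ∧
    (∀ x ∈ X,
      x = (S * Matrix.fromBlocks 1 0 0 Cb₁).mulVec
            (Sum.elim (fun i => T.mulVec x (Sum.inl i))
              (Ψb (fun i => T.mulVec x (Sum.inr i))))) := by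
  constructor
  · intro x hx u hu
    obtain ⟨hΨ, -, hg⟩ := hclosure x hx
    rw [hCAP x hx u hu, fromBlocks_mulVec, fromRows_mulVec]
    ext i
    rcases i with i | i
    · simp only [Sum.elim_inl, Pi.add_apply, Function.comp_def, Sum.elim_inr, hg]
      ring
    · simp [Function.comp_def, hΨ]
  · intro x hx
    obtain ⟨-, hx₂, -⟩ := hclosure x hx
    have hT : (fromBlocks 1 0 0 Cb₁).mulVec
        (Sum.elim (fun i => T.mulVec x (Sum.inl i))
          (Ψb (fun i => T.mulVec x (Sum.inr i)))) = T.mulVec x := by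
      rw [fromBlocks_mulVec]
      ext i
      rcases i with i | i
      · simp [Function.comp_def]
      · simpa [Function.comp_def] using (congrFun hx₂ i).symm
    -- the product in the goal elaborates to `CStarMatrix` multiplication, equal by unfolding
    refine Eq.trans ?_ (mulVec_mulVec _ S (fromBlocks 1 0 0 Cb₁))
    rw [hT, mulVec_mulVec, hST, one_mulVec]
end
end

section
/- (Necessity of the full-row-rank condition in the two-layer affine recursion lemma.) Let 𝒳 = ℝ × ℝ_{>0}, 𝒰 = ℝ, Φ(x) := col(x₁, x₂²) for x = col(x₁,x₂) ∈ 𝒳, and B := col(1, 0) ∈ ℝ^{2×1}. Then: (i) Φ(x) + Bu ∈ 𝒳 for all x ∈ 𝒳, u ∈ 𝒰, and the map (x,u) ↦ Φ(x) + Bu from 𝒳 × 𝒰 to 𝒳 is surjective; (ii) Φ(Φ(x) + Bu) = col(x₁, x₂⁴) + col(1,0)·u for all x ∈ 𝒳 and u ∈ 𝒰, i.e., the two-layer composition is affine in u; yet (iii) Φ is not affine on 𝒳: there exist no matrix C ∈ ℝ^{2×2} and vector v ∈ ℝ² with Φ(x) = Cx + v for all x ∈ 𝒳. (The matrix B does not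 have full row rank, so this does not contradict the two-layer affine recursion lemma.) -/
open Matrix

noncomputable section

/-- The state set `𝒳 = ℝ × ℝ_{>0}`. -/
def Xset : Set (Fin 2 → ℝ) := {x | 0 < x 1}

/-- The map `Φ(x) = col(x₁, x₂²)`. -/
def Phi : (Fin 2 → ℝ) → (Fin 2 → ℝ) := fun x => ![x 0, x 1 ^ 2]

/-- The input matrix `B = col(1, 0)`. -/
def Bmat : Matrix (Fin 2) (Fin 1) ℝ := !![1; 0]

/-- **Necessity of the full-row-rank condition in the two-layer affine recursion lemma.**
With `𝒳 = ℝ × ℝ_{>0}`, `𝒰 = ℝ`, `Φ(x) = col(x₁, x₂²)` and `B = col(1,0)`: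
(i) `(x,u) ↦ Φ(x) + Bu` maps `𝒳 × 𝒰` into `𝒳` and is surjective onto `𝒳`;
(ii) `Φ(Φ(x) + Bu) = col(x₁, x₂⁴) + col(1,0)u` on `𝒳 × 𝒰`, i.e. the two-layer composition
is affine in `u`; yet (iii) `Φ` is not affine on `𝒳`. -/
theorem necessity_of_full_row_rank :
    (∀ x ∈ Xset, ∀ u : Fin 1 → ℝ, Phi x + Bmat.mulVec u ∈ Xset) ∧
    (∀ y ∈ Xset, ∃ x ∈ Xset, ∃ u : Fin 1 → ℝ, Phi x + Bmat.mulVec u = y) ∧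
    (∀ x ∈ Xset, ∀ u : Fin 1 → ℝ,
      Phi (Phi x + Bmat.mulVec u) = ![x 0, x 1 ^ 4] + Bmat.mulVec u) ∧
    ¬ ∃ (C : Matrix (Fin 2) (Fin 2) ℝ) (v : Fin 2 → ℝ),
        ∀ x ∈ Xset, Phi x = C.mulVec x + v := by
  have mulVec_eq (u : Fin 1 → ℝ) : Bmat.mulVec u = ![u 0, 0] := by
    ext i
    fin_cases i <;> simp [Bmat, Matrix.mulVec, dotProduct]
  refine ⟨fun x hx u => ?_, fun y hy => ?_, fun x _ u => ?_, ?_⟩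
  · have hpos : 0 < x 1 := hx
    simp only [Xset, Set.mem_ofPred_eq, mulVec_eq, Phi]
    simp [hpos]
  · have hpos : 0 < y 1 := hy
    refine ⟨![y 0, √(y 1)], by simpa [Xset] using hpos, 0, ?_⟩
    ext i
    fin_cases i <;> simp [Phi, Real.sq_sqrt hpos.le]
  · rw [mulVec_eq]
    ext i
    fin_cases i
    · simp [Phi]
    · simp [Phi, ← pow_mul]
  · rintro ⟨C, v, h⟩
    have affine_sq (t : ℝ) (ht : 0 < t) : t ^ 2 = C 1 1 * t + v 1 := by
      simpa [Phi, Matrix.mulVec, dotProduct, Fin.sum_univ_two] using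
        congrFun (h ![0, t] (by simpa [Xset] using ht)) 1
    linarith [affine_sq 1 one_pos, affine_sq 2 two_pos, affine_sq 3 three_pos]
end
end
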